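/- arXiv:math/0405420 — 5 statements merged into one kernel-verified Lean document; each statement's English description precedes it below -/
import Mathlib

section
/- Let ω ∈ ℝ^r satisfy the Diophantine condition with constants C₀ > 0 and τ₀ ≥ r−1, let 0 < a₁ ≤ ⋯ ≤ a_s be real numbers, let τ₁ ≥ τ₀, let ε > 0 and let 0 < δ ≤ C₀/2. If for some ν ∈ ℤ^r∖{0}, some indices 1 ≤ i ≤ j ≤ s and some η, η' ∈ {−1, 0, +1} one has |ω·ν + η√(ε a_j) + η'√(ε a_i)| < δ |ν|^{−τ₁}, then √(ε a_s) ≥ (C₀/4) |ν|^{−τ₀}; equivalently, |ν| ≥ (C₀ / (4 √(ε a_s)))^{1/τ₀}. -/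
/-- If `ω` is Diophantine with constants `C₀, τ₀`, `0 < a₁ ≤ ⋯ ≤ a_s`, `τ₁ ≥ τ₀`,
`ε > 0`, `0 < δ ≤ C₀/2`, and `|ω·ν + η√(ε a_j) + η'√(ε a_i)| < δ|ν|^{−τ₁}` for some
`ν ≠ 0`, `i ≤ j` and `η, η' ∈ {−1,0,1}`, then `√(ε a_s) ≥ (C₀/4)|ν|^{−τ₀}`;
equivalently `|ν| ≥ (C₀/(4√(ε a_s)))^{1/τ₀}`. -/
theorem resonant_harmonics_are_large (r s : ℕ) (hr : 1 ≤ r) (hs : 1 ≤ s)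
    (ω : Fin r → ℝ) (C₀ τ₀ : ℝ) (hC₀ : 0 < C₀) (hτ₀ : (r : ℝ) - 1 ≤ τ₀)
    (hdio : ∀ ν : Fin r → ℤ, ν ≠ 0 →
      C₀ * (∑ k, |(ν k : ℝ)|) ^ (-τ₀) ≤ |∑ k, ω k * (ν k : ℝ)|)
    (a : Fin s → ℝ) (hpos : ∀ i, 0 < a i) (hmono : Monotone a)
    (τ₁ : ℝ) (hτ₁ : τ₀ ≤ τ₁)
    (ε : ℝ) (hε : 0 < ε)
    (δ : ℝ) (hδ0 : 0 < δ) (hδ : δ ≤ C₀ / 2)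
    (ν : Fin r → ℤ) (hν : ν ≠ 0)
    (i j : Fin s) (hij : i ≤ j)
    (η η' : ℝ) (hη : η = -1 ∨ η = 0 ∨ η = 1) (hη' : η' = -1 ∨ η' = 0 ∨ η' = 1)
    (hsmall : |∑ k, ω k * (ν k : ℝ) + η * Real.sqrt (ε * a j) + η' * Real.sqrt (ε * a i)|
      < δ * (∑ k, |(ν k : ℝ)|) ^ (-τ₁)) :
    C₀ / 4 * (∑ k, |(ν k : ℝ)|) ^ (-τ₀) ≤ Real.sqrt (ε * a ⟨s - 1, by omega⟩) ∧
    (C₀ / (4 * Real.sqrt (ε * a ⟨s - 1, by omega⟩))) ^ ((1 : ℝ) / τ₀)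
      ≤ ∑ k, |(ν k : ℝ)| := by
  have hN : (1 : ℝ) ≤ ∑ k, |(ν k : ℝ)| := by
    obtain ⟨k, hk⟩ := Function.ne_iff.mp hν
    have h1 : (1 : ℝ) ≤ |(ν k : ℝ)| := by
      exact_mod_cast Int.one_le_abs hk
    exact h1.trans (Finset.single_le_sum (f := fun k => |(ν k : ℝ)|)
      (fun _ _ => abs_nonneg _) (Finset.mem_univ k))
  have hd := hdio ν hν
  have hτ : 0 ≤ τ₀ := by
    have : (1 : ℝ) ≤ r := by exact_mod_cast hr
    linarith
  have hle : ∀ m : Fin s, Real.sqrt (ε * a m) ≤ Real.sqrt (ε * a ⟨s - 1, by omega⟩) := by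
    intro m
    apply Real.sqrt_le_sqrt
    apply mul_le_mul_of_nonneg_left _ hε.le
    apply hmono
    rw [Fin.le_def]
    have := m.2
    simp only
    omega
  have hi := hle i
  have hj := hle j
  have hSpos : 0 < Real.sqrt (ε * a ⟨s - 1, by omega⟩) :=
    Real.sqrt_pos.mpr (mul_pos hε (hpos _))
  have hi0 := Real.sqrt_nonneg (ε * a i)
  have hj0 := Real.sqrt_nonneg (ε * a j)
  generalize Real.sqrt (ε * a ⟨s - 1, by omega⟩) = S at *
  generalize Real.sqrt (ε * a i) = x at *
  generalize Real.sqrt (ε * a j) = y at *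
  generalize (∑ k, |(ν k : ℝ)|) = N at *
  generalize (∑ k, ω k * (ν k : ℝ)) = w at *
  have hN0 : 0 < N := by linarith
  have hp : N ^ (-τ₁) ≤ N ^ (-τ₀) := Real.rpow_le_rpow_of_exponent_le hN (by linarith)
  have hq : 0 < N ^ (-τ₀) := Real.rpow_pos_of_pos hN0 _
  have hs2 : δ * N ^ (-τ₁) ≤ C₀ / 2 * N ^ (-τ₀) :=
    mul_le_mul hδ hp (Real.rpow_pos_of_pos hN0 _).le (by linarith)
  have hy : |η * y| ≤ S := by
    rw [abs_le]
    rcases hη with h | h | h <;> subst h <;> constructor <;> linarith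
  have hx : |η' * x| ≤ S := by
    rw [abs_le]
    rcases hη' with h | h | h <;> subst h <;> constructor <;> linarith
  have hw : |w| ≤ |w + η * y + η' * x| + S + S := by
    rw [abs_le] at hx hy
    have h1 := le_abs_self (w + η * y + η' * x)
    have h2 := neg_abs_le (w + η * y + η' * x)
    rw [abs_le]
    constructor <;> linarith [hx.1, hx.2, hy.1, hy.2]
  have main : C₀ / 4 * N ^ (-τ₀) ≤ S := by linarith
  refine ⟨main, ?_⟩
  rcases hτ.eq_or_lt with h0 | h0
  · rw [← h0]; simpa using hN
  · have hb : C₀ / (4 * S) ≤ N ^ τ₀ := by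
      rw [Real.rpow_neg hN0.le] at main
      have hP : 0 < N ^ τ₀ := Real.rpow_pos_of_pos hN0 _
      rw [← div_eq_mul_inv, div_le_iff₀ hP] at main
      rw [div_le_iff₀ (by linarith)]
      linarith
    calc (C₀ / (4 * S)) ^ ((1 : ℝ) / τ₀) ≤ (N ^ τ₀) ^ ((1 : ℝ) / τ₀) :=
          Real.rpow_le_rpow (by positivity) hb (by positivity)
      _ = N := by
          rw [← Real.rpow_mul hN0.le, mul_one_div_cancel h0.ne', Real.rpow_one]
end

section
/- Let M₀ be a d×d Hermitian matrix whose distinct eigenvalues are λ₁ < ⋯ < λ_p with multiplicities n₁, …, n_p (so n₁ + ⋯ + n_p = d), and let M₁ be a d×d Hermitian matrix. Then there exist ε₀ > 0, C > 0 and real-analytic functions λ_{j,k} : (−ε₀, ε₀) → ℝ for 1 ≤ j ≤ p and 1 ≤ k ≤ n_j, with λ_{j,k}(0) = λ_j, such that for every ε ∈ (−ε₀, ε₀) the family (λ_{j,k}(ε))_{j,k} is exactly the list of eigenvalues of M₀ + ε M₁ counted with multiplicity, and |λ_{j,k}(ε) − λ_{j,k'}(ε)| ≤ C|ε| for every j and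 all 1 ≤ k, k' ≤ n_j. -/
open Polynomial Topology Filter

def AnP (P : ℝ → ℂ[X]) : Prop := ∀ i, AnalyticAt ℝ (fun ε => (P ε).coeff i) 0

theorem anP_const (p : ℂ[X]) : AnP (fun _ => p) := fun _ => analyticAt_const

theorem anP_C {f : ℝ → ℂ} (hf : AnalyticAt ℝ f 0) : AnP (fun ε => C (f ε)) := by
  intro i
  by_cases h : i = 0
  · simpa [coeff_C, h] using hf
  · simpa [coeff_C, h] using analyticAt_const

theorem AnP.add {P Q : ℝ → ℂ[X]} (hP : AnP P) (hQ : AnP Q) : AnP (fun ε => P ε + Q ε) := by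
  intro i
  simp only [coeff_add]
  exact (hP i).add (hQ i)

theorem AnP.sub {P Q : ℝ → ℂ[X]} (hP : AnP P) (hQ : AnP Q) : AnP (fun ε => P ε - Q ε) := by
  intro i
  simp only [coeff_sub]
  exact (hP i).sub (hQ i)

theorem AnP.mul {P Q : ℝ → ℂ[X]} (hP : AnP P) (hQ : AnP Q) : AnP (fun ε => P ε * Q ε) := by
  intro i
  simp only [coeff_mul]
  exact Finset.analyticAt_fun_sum _ fun x _ => (hP x.1).mul (hQ x.2)

theorem AnP.sum {ι : Type*} {P : ι → ℝ → ℂ[X]} (s : Finset ι) (h : ∀ i ∈ s, AnP (P i)) :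
    AnP (fun ε => ∑ i ∈ s, P i ε) := by
  intro k
  simp only [finsetSum_coeff]
  exact Finset.analyticAt_fun_sum _ fun i hi => h i hi k

theorem AnP.prod {ι : Type*} {P : ι → ℝ → ℂ[X]} (s : Finset ι) (h : ∀ i ∈ s, AnP (P i)) :
    AnP (fun ε => ∏ i ∈ s, P i ε) := by
  classical
  induction s using Finset.induction_on with
  | empty => simpa using anP_const 1
  | insert a s ha ih =>
    simp only [Finset.prod_insert ha]
    exact (h a (by simp)).mul (ih fun i hi => h i (by simp [hi]))

theorem AnP.pow {P : ℝ → ℂ[X]} (hP : AnP P) (n : ℕ) : AnP (fun ε => P ε ^ n) := by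
  simpa using AnP.prod (Finset.range n) (P := fun _ => P) fun _ _ => hP

theorem AnP.comp {P : ℝ → ℂ[X]} (hP : AnP P) {n : ℕ} (hn : ∀ ε, (P ε).natDegree = n)
    {Q : ℝ → ℂ[X]} (hQ : AnP Q) : AnP (fun ε => (P ε).comp (Q ε)) := by
  have : (fun ε => (P ε).comp (Q ε)) =
      fun ε => ∑ i ∈ Finset.range (n+1), C ((P ε).coeff i) * (Q ε) ^ i := by
    funext ε
    rw [Polynomial.comp, eval₂_eq_sum_range, hn]
  rw [this]
  exact AnP.sum _ fun i _ => (anP_C (hP i)).mul (hQ.pow i)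

noncomputable def TT (a : ℕ) : (Fin a → ℂ) →ₗ[ℝ] ℂ[X] where
  toFun x := ∑ i, C (x i) * X ^ (i : ℕ)
  map_add' x y := by simp [add_mul, Finset.sum_add_distrib]
  map_smul' r x := by
    simp only [Finset.smul_sum, RingHom.id_apply]
    refine Finset.sum_congr rfl fun i _ => ?_
    rw [Pi.smul_apply, ← smul_mul_assoc, smul_C]

theorem TT_coeff (a : ℕ) (x : Fin a → ℂ) (i : Fin a) : (TT a x).coeff i = x i := by
  simp [TT, coeff_C_mul, coeff_X_pow, Fin.val_inj]

theorem TT_degree (a : ℕ) (x : Fin a → ℂ) : (TT a x).degree < a := by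
  change (∑ i, C (x i) * X ^ (i : ℕ)).degree < (a : WithBot ℕ)
  refine (degree_sum_le _ _).trans_lt ?_
  rw [Finset.sup_lt_iff (by exact WithBot.bot_lt_coe a)]
  intro i _
  refine (degree_C_mul_X_pow_le _ _).trans_lt ?_
  exact_mod_cast i.2

noncomputable def KK (n : ℕ) : ℂ[X] →ₗ[ℝ] (Fin n → ℂ) where
  toFun p i := p.coeff i
  map_add' x y := by ext; simp
  map_smul' r x := by ext; simp

theorem KK_inj (n : ℕ) {p q : ℂ[X]} (hp : p.degree < n) (hq : q.degree < n)
    (h : KK n p = KK n q) : p = q := by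
  ext i
  by_cases hi : i < n
  · exact congrFun h ⟨i, hi⟩
  · have : (n : WithBot ℕ) ≤ i := by exact_mod_cast not_lt.mp hi
    rw [coeff_eq_zero_of_degree_lt (hp.trans_le this), coeff_eq_zero_of_degree_lt (hq.trans_le this)]

theorem AnP_TT {a : ℕ} {x : ℝ → Fin a → ℂ} (hx : AnalyticAt ℝ x 0) : AnP (fun ε => TT a (x ε)) := by
  have hx' := analyticAt_pi_iff.1 hx
  change AnP (fun ε => ∑ i, C (x ε i) * X ^ (i : ℕ))
  exact AnP.sum _ fun i _ => (anP_C (hx' i)).mul (anP_const _)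

theorem hensel {a b : ℕ} {u v : ℂ[X]} (hu : u.Monic) (hv : v.Monic) (hua : u.natDegree = a)
    (hvb : v.natDegree = b) (huv : IsCoprime u v) {Q : ℝ → ℂ[X]} (hQ : AnP Q)
    (hQm : ∀ ε, (Q ε).Monic) (hQd : ∀ ε, (Q ε).natDegree = a + b) (hQ0 : Q 0 = u * v) :
    ∃ U V : ℝ → ℂ[X], AnP U ∧ AnP V ∧ (∀ ε, (U ε).Monic) ∧ (∀ ε, (V ε).Monic) ∧
      (∀ ε, (U ε).natDegree = a) ∧ (∀ ε, (V ε).natDegree = b) ∧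
      ∀ᶠ ε in 𝓝 0, Q ε = U ε * V ε := by
  let D : ((Fin a → ℂ) × (Fin b → ℂ)) →ₗ[ℝ] (Fin (a+b) → ℂ) :=
    (KK (a+b)).comp (((LinearMap.mulLeft ℝ v).comp (TT a)).coprod ((LinearMap.mulLeft ℝ u).comp (TT b)))
  have hDdef : ∀ x y, D (x, y) = KK (a+b) (v * TT a x + u * TT b y) := fun x y => rfl
  have hud : u.degree = a := by rw [degree_eq_natDegree hu.ne_zero, hua]
  have hvd : v.degree = b := by rw [degree_eq_natDegree hv.ne_zero, hvb]
  have d1 : ∀ x, (v * TT a x).degree < (a + b : ℕ) := by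
    intro x
    by_cases hx : TT a x = 0
    · simp [hx]
    rw [degree_mul, hvd, add_comm, Nat.cast_add]
    exact WithBot.add_lt_add_right (by simp) (TT_degree a x)
  have d2 : ∀ x, (u * TT b x).degree < (a + b : ℕ) := by
    intro x
    rw [degree_mul, hud, Nat.cast_add]
    exact WithBot.add_lt_add_left (by simp) (TT_degree b x)
  have d3 : ∀ x y, (TT a x * TT b y).degree < (a + b : ℕ) := by
    intro x y
    by_cases hx : TT a x = 0
    · simp [hx]
    have : (a : WithBot ℕ) + (TT b y).degree ≤ (a + b : ℕ) := by
      rw [Nat.cast_add]; gcongr; exact (TT_degree b y).le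
    by_cases hy : TT b y = 0
    · simp [hy]
    rw [degree_mul]
    refine lt_of_lt_of_le (WithBot.add_lt_add_right (by simpa using hy) (TT_degree a x)) this
  have Dinj : Function.Injective D := by
    rw [← LinearMap.ker_eq_bot, LinearMap.ker_eq_bot']
    rintro ⟨x, y⟩ h
    rw [hDdef] at h
    have h0 : v * TT a x + u * TT b y = 0 := by
      refine KK_inj (a+b) ((degree_add_le _ _).trans_lt (max_lt (d1 x) (d2 y))) (by simp) ?_
      rw [h]; simp
    have hdv : u ∣ TT a x := by
      refine huv.dvd_of_dvd_mul_left (z := TT a x) ⟨- TT b y, ?_⟩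
      linear_combination h0
    have hx0 : TT a x = 0 := eq_zero_of_dvd_of_degree_lt hdv (by rw [hud]; exact TT_degree a x)
    have hy0 : TT b y = 0 := by
      rw [hx0, mul_zero, zero_add] at h0
      exact (mul_eq_zero.1 h0).resolve_left hu.ne_zero
    ext i
    · simpa [hx0] using (TT_coeff a x i).symm
    · simpa [hy0] using (TT_coeff b y i).symm
  let De : ((Fin a → ℂ) × (Fin b → ℂ)) ≃ₗ[ℝ] (Fin (a+b) → ℂ) :=
    LinearEquiv.ofInjectiveOfFinrankEq D Dinj (by simp [Module.finrank_pi_fintype, add_mul])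
  let Dc := De.toContinuousLinearEquiv
  have hDc : ∀ z, Dc z = D z := fun z => rfl
  let B : (Fin a → ℂ) →ₗ[ℝ] (Fin b → ℂ) →ₗ[ℝ] (Fin (a+b) → ℂ) :=
    LinearMap.mk₂ ℝ (fun x y => KK (a+b) (TT a x * TT b y))
      (by intros; simp [add_mul]) (by intros; simp) (by intros; simp [mul_add]) (by intros; simp)
  let Bc := B.toContinuousBilinearMap
  have hBc : ∀ x y, Bc x y = KK (a+b) (TT a x * TT b y) := fun x y => rfl
  let Ψ : ((Fin a → ℂ) × (Fin b → ℂ)) → (Fin (a+b) → ℂ) := fun z => Dc z + Bc z.1 z.2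
  have hΨan : AnalyticAt ℝ Ψ 0 :=
    (Dc.toContinuousLinearMap.analyticAt 0).add (Bc.analyticAt_bilinear 0)
  have hΨd : HasFDerivAt Ψ (Dc : _ →L[ℝ] (Fin (a+b) → ℂ)) 0 := by
    have h1 := Dc.toContinuousLinearMap.hasFDerivAt (x := 0)
    have h2 := Bc.isBoundedBilinearMap.hasFDerivAt 0
    have h3 := h1.add h2
    refine h3.congr_fderiv ?_
    refine ContinuousLinearMap.ext fun z => ?_
    change Dc z + Bc.isBoundedBilinearMap.deriv 0 z = Dc z
    change Dc z + (Bc (0 : (Fin a → ℂ) × (Fin b → ℂ)).1 z.2 + Bc z.1 (0 : (Fin a → ℂ) × (Fin b → ℂ)).2) = Dc z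
    simp
  have hΨ0 : Ψ 0 = 0 := by simp [Ψ]
  have hcd : ContDiffAt ℝ ⊤ Ψ 0 := hΨan.contDiffAt
  have hs : HasStrictFDerivAt Ψ (Dc : _ →L[ℝ] (Fin (a+b) → ℂ)) 0 :=
    hcd.hasStrictFDerivAt' hΨd (by simp)
  let g := hcd.localInverse hΨd (by simp)
  have hg : AnalyticAt ℝ g 0 := by
    have := hcd.to_localInverse hΨd (by simp)
    rw [hΨ0] at this
    exact this.analyticAt
  have hginv : ∀ᶠ w in 𝓝 (0 : Fin (a+b) → ℂ), Ψ (g w) = w := by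
    have := hs.eventually_right_inverse
    rw [hΨ0] at this
    exact this
  let w : ℝ → (Fin (a+b) → ℂ) := fun ε => KK (a+b) (Q ε - Q 0)
  have hw : AnalyticAt ℝ w 0 := by
    rw [analyticAt_pi_iff]
    intro i
    exact hQ.sub (anP_const (Q 0)) i
  have hw0 : w 0 = 0 := by simp [w]
  have hgw : AnalyticAt ℝ (fun ε => g (w ε)) 0 := by
    refine AnalyticAt.fun_comp ?_ hw
    rw [hw0]; exact hg
  have hx : AnalyticAt ℝ (fun ε => (g (w ε)).1) 0 := analyticAt_fst.fun_comp hgw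
  have hy : AnalyticAt ℝ (fun ε => (g (w ε)).2) 0 := analyticAt_snd.fun_comp hgw
  have du : ∀ x, (TT a x).degree < u.degree := fun x => by rw [hud]; exact TT_degree a x
  have dv : ∀ x, (TT b x).degree < v.degree := fun x => by rw [hvd]; exact TT_degree b x
  refine ⟨fun ε => u + TT a (g (w ε)).1, fun ε => v + TT b (g (w ε)).2,
    (anP_const u).add (AnP_TT hx), (anP_const v).add (AnP_TT hy),
    fun ε => hu.add_of_left (du _), fun ε => hv.add_of_left (dv _),
    fun ε => by rw [natDegree_add_eq_left_of_degree_lt (du _), hua],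
    fun ε => by rw [natDegree_add_eq_left_of_degree_lt (dv _), hvb], ?_⟩
  have hwt : Tendsto w (𝓝 0) (𝓝 0) := by
    have := hw.continuousAt.tendsto
    rwa [hw0] at this
  filter_upwards [hwt.eventually hginv] with ε hε
  set x := (g (w ε)).1 with hxd
  set y := (g (w ε)).2 with hyd
  have key : KK (a+b) (v * TT a x + u * TT b y + TT a x * TT b y) = KK (a+b) (Q ε - Q 0) := by
    rw [map_add, ← hDdef, ← hBc]
    exact hε
  have hd : (Q ε - Q 0).degree < (a + b : ℕ) := by
    have e1 : (Q ε).degree = (a+b : ℕ) := by rw [degree_eq_natDegree (hQm ε).ne_zero, hQd]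
    have e2 : (Q 0).degree = (a+b : ℕ) := by rw [degree_eq_natDegree (hQm 0).ne_zero, hQd]
    rw [← e1]
    exact degree_sub_lt_left (by rw [e1, e2]) (hQm ε).ne_zero (by rw [(hQm ε).leadingCoeff, (hQm 0).leadingCoeff])
  have := KK_inj (a+b) ((degree_add_le _ _).trans_lt (max_lt ((degree_add_le _ _).trans_lt (max_lt (d1 x) (d2 y))) (d3 x y))) hd key
  linear_combination -this + hQ0

theorem esymm_two_aux (s : Multiset ℂ) :
    (s.map (fun z => z ^ 2)).sum = s.sum ^ 2 - 2 * s.esymm 2 := by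
  induction s using Multiset.induction_on with
  | empty => simp [Multiset.esymm, Multiset.powersetCard_zero_right 1]
  | cons a s ih =>
    have : (a ::ₘ s).esymm 2 = s.esymm 2 + a * s.sum := by
      simp [Multiset.esymm, Multiset.powersetCard_cons, Multiset.powersetCard_one]
      simpa using Multiset.sum_map_mul_left (s := s) (a := a) (f := id)
    rw [this]
    simp [ih]
    ring

/-- divide out a power -/
theorem div_pow_aux {f : ℝ → ℂ} (hf : AnalyticAt ℝ f 0) (N : ℕ) (K : ℝ)
    (h : ∀ᶠ ε in 𝓝[≠] (0:ℝ), ‖f ε‖ ≤ K * |ε| ^ N) :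
    ∃ g : ℝ → ℂ, AnalyticAt ℝ g 0 ∧ ∀ᶠ ε in 𝓝 (0:ℝ), f ε = (ε : ℂ) ^ N * g ε := by
  by_cases h0 : ∀ᶠ ε in 𝓝 (0:ℝ), f ε = 0
  · exact ⟨fun _ => 0, analyticAt_const, by simpa using h0⟩
  obtain ⟨k, g, hg, hg0, hfg⟩ := hf.exists_eventuallyEq_pow_smul_nonzero_iff.2 h0
  by_cases hk : N ≤ k
  · refine ⟨fun ε => (ε : ℂ) ^ (k - N) * g ε, ?_, ?_⟩
    · exact ((Complex.ofRealCLM.analyticAt 0).pow _).mul hg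
    · filter_upwards [hfg] with ε hε
      rw [hε, ← mul_assoc, ← pow_add, Nat.add_sub_cancel' hk]
      simp
  · exfalso
    push Not at hk
    have h1 : ∀ᶠ ε in 𝓝[≠] (0:ℝ), ‖g ε‖ ≤ K * |ε| ^ (N - k) := by
      filter_upwards [h, hfg.filter_mono nhdsWithin_le_nhds, self_mem_nhdsWithin] with ε h1 h2 h3
      have h3 : 0 < |ε| := abs_pos.2 h3
      rw [h2, norm_smul, norm_pow, sub_zero, Real.norm_eq_abs] at h1
      have : K * |ε| ^ N = |ε| ^ k * (K * |ε| ^ (N - k)) := by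
        rw [← Nat.add_sub_cancel' hk.le, pow_add, Nat.add_sub_cancel' hk.le]; ring
      rw [this] at h1
      exact le_of_mul_le_mul_left h1 (by positivity)
    have t1 : Tendsto (fun ε => ‖g ε‖) (𝓝[≠] (0:ℝ)) (𝓝 ‖g 0‖) :=
      (hg.continuousAt.norm.tendsto).mono_left nhdsWithin_le_nhds
    have t2 : Tendsto (fun ε : ℝ => K * |ε| ^ (N - k)) (𝓝[≠] (0:ℝ)) (𝓝 0) := by
      have : Continuous (fun ε : ℝ => K * |ε| ^ (N - k)) := by fun_prop
      have := (this.tendsto 0).mono_left (nhdsWithin_le_nhds (s := {(0:ℝ)}ᶜ))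
      simpa [show N - k ≠ 0 by omega] using this
    have := le_of_tendsto_of_tendsto t1 t2 h1
    exact hg0 (norm_le_zero_iff.1 this)

/-- even order of a nonnegative function -/
theorem even_aux {f : ℝ → ℂ} {g : ℝ → ℂ} (hg : AnalyticAt ℝ g 0) (hg0 : g 0 ≠ 0) (k : ℕ)
    (hfg : ∀ᶠ ε in 𝓝[≠] (0:ℝ), f ε = (ε : ℂ) ^ k * g ε)
    (hf : ∀ᶠ ε in 𝓝[≠] (0:ℝ), ∃ r : ℝ, 0 ≤ r ∧ f ε = r) : Even k := by
  by_contra hk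
  rw [Nat.not_even_iff_odd] at hk
  have hneg : Tendsto (fun ε : ℝ => -ε) (𝓝[≠] 0) (𝓝[≠] 0) := by
    refine tendsto_nhdsWithin_iff.2 ⟨?_, ?_⟩
    · have : Continuous (fun ε : ℝ => -ε) := by fun_prop
      have := (this.tendsto 0).mono_left (nhdsWithin_le_nhds (s := {(0:ℝ)}ᶜ))
      simpa using this
    · filter_upwards [self_mem_nhdsWithin] with ε hε
      simpa using hε
  have key : ∀ᶠ ε in 𝓝[≠] (0:ℝ), ∃ r : ℝ, 0 ≤ r ∧ g ε * g (-ε) = -(r : ℂ) := by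
    filter_upwards [hfg, hf, hneg.eventually hfg, hneg.eventually hf, self_mem_nhdsWithin]
      with ε h1 ⟨r, hr, h2⟩ h3 ⟨s, hs, h4⟩ h5
    have h5 : (ε : ℂ) ≠ 0 := by exact_mod_cast h5
    refine ⟨r * s / (ε ^ k) ^ 2, by positivity, ?_⟩
    push_cast
    rw [← h2, ← h4, h1, h3]
    push_cast
    rw [hk.neg_pow]
    field_simp
  have t0 : Tendsto g (𝓝[≠] (0:ℝ)) (𝓝 (g 0)) :=
    (hg.continuousAt.tendsto).mono_left nhdsWithin_le_nhds
  have t1 := t0.mul (t0.comp hneg)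
  -- g 0 is itself real up to sign: use positivity for positive ε
  have hreal : (g 0).im = 0 := by
    have tim := (Complex.continuous_im.tendsto _).comp t0
    refine tendsto_nhds_unique tim ?_
    refine tendsto_const_nhds.congr' ?_
    filter_upwards [hfg, hf, self_mem_nhdsWithin] with ε h1 ⟨r, hr, h2⟩ h5
    have h5 : (ε : ℂ) ≠ 0 := by exact_mod_cast h5
    have : g ε = ((r / ε ^ k : ℝ) : ℂ) := by
      push_cast
      rw [← h2, h1]; field_simp
    simp only [Function.comp, this, Complex.ofReal_im]
  have tre := (Complex.continuous_re.tendsto _).comp t1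
  have hle : (g 0 * g 0).re ≤ 0 := by
    refine le_of_tendsto tre ?_
    filter_upwards [key] with ε ⟨r, hr, h⟩
    simp only [Function.comp] at *
    rw [h]; simpa using hr
  have : (g 0).re ^ 2 ≤ 0 := by
    simp [Complex.mul_re, hreal] at hle
    nlinarith
  have : (g 0).re = 0 := by nlinarith [sq_nonneg (g 0).re, pow_eq_zero_iff (M₀ := ℝ) (n := 2) (a := (g 0).re) (by norm_num)]
  exact hg0 (Complex.ext this hreal)

theorem eq_at_zero {f g : ℝ → ℂ} (hf : AnalyticAt ℝ f 0) (hg : AnalyticAt ℝ g 0)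
    (h : ∀ᶠ ε in 𝓝[≠] (0:ℝ), f ε = g ε) : f 0 = g 0 :=
  tendsto_nhds_unique_of_eventuallyEq (hf.continuousAt.tendsto.mono_left nhdsWithin_le_nhds)
    (hg.continuousAt.tendsto.mono_left nhdsWithin_le_nhds) h

structure Fam (n : ℕ) (P : ℝ → ℂ[X]) : Prop where
  an : AnP P
  monic : ∀ ε, (P ε).Monic
  deg : ∀ ε, (P ε).natDegree = n
  real : ∀ᶠ ε in 𝓝[≠] (0:ℝ), ∀ z, (P ε).IsRoot z → z.im = 0

def Good (P : ℝ → ℂ[X]) : Prop := ∃ L : Multiset (ℝ → ℂ), (∀ f ∈ L, AnalyticAt ℝ f 0) ∧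
  ∀ᶠ ε in 𝓝 (0:ℝ), P ε = (L.map (fun f => X - C (f ε))).prod

theorem sumsq {n : ℕ} (hn : 2 ≤ n) {p : ℂ[X]} (hp : p.Monic) (hd : p.natDegree = n)
    (hc : p.coeff (n-1) = 0) : (p.roots.map (fun z => z ^ 2)).sum = -2 * p.coeff (n-2) := by
  have hs : p.Splits := IsAlgClosed.splits p
  have hcard : p.roots.card = p.natDegree := hs.natDegree_eq_card_roots.symm
  have e1 := coeff_eq_esymm_roots_of_card hcard (k := n-1) (by omega)
  have e2 := coeff_eq_esymm_roots_of_card hcard (k := n-2) (by omega)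
  rw [hp.leadingCoeff, hd, show n - (n-1) = 1 by omega, hc] at e1
  rw [hp.leadingCoeff, hd, show n - (n-2) = 2 by omega] at e2
  have e3 : p.roots.esymm 1 = p.roots.sum := by
    simp [Multiset.esymm, Multiset.powersetCard_one]
  rw [esymm_two_aux, e2, ← e3]
  have : p.roots.esymm 1 = 0 := by simpa using e1.symm
  rw [this]; ring

theorem sumsq_real (s : Multiset ℂ) (h : ∀ z ∈ s, z.im = 0) :
    ∃ r : ℝ, 0 ≤ r ∧ (s.map (fun z => z ^ 2)).sum = (r : ℂ) ∧ ∀ z ∈ s, ‖z‖ ^ 2 ≤ r := by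
  induction s using Multiset.induction_on with
  | empty => exact ⟨0, le_rfl, by simp, by simp⟩
  | cons a s ih =>
    obtain ⟨r, hr, h1, h2⟩ := ih fun z hz => h z (by simp [hz])
    have ha : a.im = 0 := h a (by simp)
    have ha' : a = (a.re : ℂ) := Complex.ext rfl (by simp [ha])
    have hn : ‖a‖ ^ 2 = a.re ^ 2 := by rw [ha', Complex.norm_real]; simp
    refine ⟨a.re ^ 2 + r, by positivity, ?_, ?_⟩
    · rw [Multiset.map_cons, Multiset.sum_cons, h1]
      push_cast
      rw [← ha']
    · intro z hz
      rcases Multiset.mem_cons.1 hz with rfl | hz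
      · rw [hn]; linarith
      · have := h2 z hz
        nlinarith [sq_nonneg a.re]

theorem coeff_bd {n : ℕ} {p : ℂ[X]} (hp : p.Monic) (hd : p.natDegree = n) {B : ℝ}
    (h : ∀ z ∈ p.roots, ‖z‖ ≤ B) (i : ℕ) : ‖p.coeff i‖ ≤ B ^ (n - i) * n.choose i := by
  have := coeff_le_of_roots_le (p := p) (f := RingHom.id ℂ) (B := B) i hp
    (by simpa using IsAlgClosed.splits p) (by simpa using h)
  simpa [hd] using this

theorem centered_step {n : ℕ} (hn : 2 ≤ n) {P : ℝ → ℂ[X]} (hP : Fam n P)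
    (hc : ∀ ε, (P ε).coeff (n-1) = 0) :
    (∀ᶠ ε in 𝓝 (0:ℝ), P ε = X ^ n) ∨
    ∃ (m : ℕ) (Q : ℝ → ℂ[X]), AnP Q ∧ (∀ ε, (Q ε).Monic) ∧ (∀ ε, (Q ε).natDegree = n) ∧
      (∀ᶠ ε in 𝓝 (0:ℝ), P ε = (Q ε).scaleRoots ((ε : ℂ) ^ m)) ∧
      (Q 0).coeff (n-1) = 0 ∧ (Q 0).coeff (n-2) ≠ 0 := by
  let S : ℝ → ℂ := fun ε => -2 * (P ε).coeff (n-2)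
  have hS : AnalyticAt ℝ S 0 := analyticAt_const.mul (hP.an _)
  have hroot : ∀ᶠ ε in 𝓝[≠] (0:ℝ), ∃ r : ℝ, 0 ≤ r ∧ S ε = r ∧ ∀ z ∈ (P ε).roots, ‖z‖ ^ 2 ≤ r := by
    filter_upwards [hP.real] with ε hε
    have := sumsq_real (P ε).roots fun z hz => hε z (isRoot_of_mem_roots hz)
    rwa [sumsq hn (hP.monic ε) (hP.deg ε) (hc ε)] at this
  by_cases h0 : ∀ᶠ ε in 𝓝 (0:ℝ), S ε = 0
  · left
    have h1 : ∀ i < n, ∀ᶠ ε in 𝓝[≠] (0:ℝ), (P ε).coeff i = 0 := by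
      intro i hi
      filter_upwards [h0.filter_mono nhdsWithin_le_nhds, hroot] with ε h1 ⟨r, hr, h2, h3⟩
      have hr0 : r = 0 := by
        rw [h1] at h2; exact_mod_cast h2.symm
      have := coeff_bd (hP.monic ε) (hP.deg ε) (B := 0) (fun z hz => by
        have := h3 z hz
        rw [hr0] at this
        nlinarith [norm_nonneg z]) i
      rw [zero_pow (by omega), zero_mul] at this
      exact norm_le_zero_iff.1 this
    have h2 : ∀ i < n, ∀ᶠ ε in 𝓝 (0:ℝ), (P ε).coeff i = 0 := by
      intro i hi
      have ha := eq_at_zero (hP.an i) analyticAt_const (h1 i hi)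
      have := h1 i hi
      rw [eventually_nhdsWithin_iff] at this
      filter_upwards [this] with ε hε
      by_cases he : ε = 0
      · rw [he]; exact ha
      · exact hε he
    have h3 : ∀ᶠ ε in 𝓝 (0:ℝ), ∀ i ∈ Finset.range n, (P ε).coeff i = 0 := by
      rw [Filter.eventually_all_finset]
      intro i hi
      exact h2 i (Finset.mem_range.1 hi)
    filter_upwards [h3] with ε hε
    ext i
    rw [coeff_X_pow]
    rcases lt_trichotomy i n with hi | hi | hi
    · rw [hε i (Finset.mem_range.2 hi), if_neg hi.ne]
    · rw [if_pos hi, hi]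
      have := (hP.monic ε).coeff_natDegree
      rwa [hP.deg] at this
    · rw [if_neg hi.ne', coeff_eq_zero_of_natDegree_lt (by rw [hP.deg]; exact hi)]
  · right
    obtain ⟨k, g, hg, hg0, hSg⟩ := hS.exists_eventuallyEq_pow_smul_nonzero_iff.2 h0
    have hSg : ∀ᶠ ε in 𝓝 (0:ℝ), S ε = (ε : ℂ) ^ k * g ε := by
      filter_upwards [hSg] with ε h; rw [h]; simp
    have hev := even_aux hg hg0 k (hSg.filter_mono nhdsWithin_le_nhds)
      (hroot.mono fun ε ⟨r, h1, h2, _⟩ => ⟨r, h1, h2⟩)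
    obtain ⟨m, hm⟩ := hev
    have hk : k = 2 * m := by omega
    subst hk
    clear hm
    set K := ‖g 0‖ + 1 with hK
    have hKpos : 0 < K := by positivity
    have hgK : ∀ᶠ ε in 𝓝 (0:ℝ), ‖g ε‖ < K :=
      hg.continuousAt.norm.eventually_lt_const (by simp [hK])
    have hbd : ∀ i, ∀ᶠ ε in 𝓝[≠] (0:ℝ),
        ‖(P ε).coeff i‖ ≤ (Real.sqrt K ^ (n-i) * n.choose i) * |ε| ^ (m * (n-i)) := by
      intro i
      filter_upwards [hroot, hSg.filter_mono nhdsWithin_le_nhds,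
        hgK.filter_mono nhdsWithin_le_nhds] with ε ⟨r, hr, h2, h3⟩ h4 h5
      have hrK : r ≤ K * (|ε| ^ m) ^ 2 := by
        have e1 : ‖S ε‖ = r := by rw [h2, Complex.norm_real, Real.norm_of_nonneg hr]
        rw [← e1, h4, norm_mul, norm_pow, Complex.norm_real, Real.norm_eq_abs, ← pow_mul,
          mul_comm m 2, mul_comm]
        gcongr
      have := coeff_bd (hP.monic ε) (hP.deg ε) (B := Real.sqrt K * |ε| ^ m) (fun z hz => by
        refine abs_le_of_sq_le_sq' ?_ (by positivity) |>.2
        rw [mul_pow, Real.sq_sqrt hKpos.le]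
        exact (h3 z hz).trans hrK) i
      refine this.trans (le_of_eq ?_)
      rw [mul_pow, ← pow_mul]; ring
    have hex := fun i => div_pow_aux (hP.an i) (m * (n-i)) _ (hbd i)
    choose h hh hPh using hex
    have hTd : ∀ x, (TT n x).degree < (X ^ n : ℂ[X]).degree := fun x => by
      rw [degree_X_pow]; exact TT_degree n x
    have hQc : ∀ ε (i : ℕ), i < n → (X ^ n + TT n (fun i => h i ε)).coeff i = h i ε := by
      intro ε i hi
      rw [coeff_add, coeff_X_pow, if_neg hi.ne, zero_add]
      exact TT_coeff n _ ⟨i, hi⟩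
    have hQm : ∀ ε, (X ^ n + TT n (fun i => h i ε)).Monic :=
      fun ε => (monic_X_pow n).add_of_left (hTd _)
    have hQd : ∀ ε, (X ^ n + TT n (fun i => h i ε)).natDegree = n :=
      fun ε => by rw [natDegree_add_eq_left_of_degree_lt (hTd _), natDegree_X_pow]
    refine ⟨m, fun ε => X ^ n + TT n (fun i => h i ε), ?_, hQm, hQd, ?_, ?_, ?_⟩
    · exact (anP_const _).add (AnP_TT (analyticAt_pi_iff.2 fun i => hh i))
    · have h3 : ∀ᶠ ε in 𝓝 (0:ℝ), ∀ i ∈ Finset.range n,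
          (P ε).coeff i = (ε : ℂ) ^ (m * (n-i)) * h i ε := by
        rw [Filter.eventually_all_finset]
        exact fun i _ => hPh i
      filter_upwards [h3] with ε hε
      ext i
      rw [coeff_scaleRoots, hQd]
      rcases lt_trichotomy i n with hi | hi | hi
      · rw [hε i (Finset.mem_range.2 hi), hQc ε i hi, ← pow_mul, mul_comm]
      · have e1 := (hP.monic ε).coeff_natDegree
        have e2 := (hQm ε).coeff_natDegree
        rw [hP.deg] at e1
        rw [hQd] at e2
        rw [hi, e1, e2]; simp
      · rw [coeff_eq_zero_of_natDegree_lt (by rw [hP.deg]; exact hi),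
          coeff_eq_zero_of_natDegree_lt (by rw [hQd]; exact hi), zero_mul]
    · rw [hQc 0 _ (by omega)]
      refine eq_at_zero (hh _) (g := fun _ => 0) analyticAt_const ?_
      filter_upwards [(hPh (n-1)).filter_mono nhdsWithin_le_nhds, self_mem_nhdsWithin] with ε h1 h2
      have h2 : (ε : ℂ) ≠ 0 := by exact_mod_cast h2
      rw [hc] at h1
      exact (mul_eq_zero.1 h1.symm).resolve_left (pow_ne_zero _ h2)
    · rw [hQc 0 _ (by omega)]
      have : g 0 = -2 * h (n-2) 0 := by
        refine eq_at_zero hg (g := fun ε => -2 * h (n-2) ε) (analyticAt_const.mul (hh _)) ?_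
        filter_upwards [(hPh (n-2)).filter_mono nhdsWithin_le_nhds,
          hSg.filter_mono nhdsWithin_le_nhds, self_mem_nhdsWithin] with ε h1 h3 h2
        have h2 : (ε : ℂ) ≠ 0 := by exact_mod_cast h2
        have h4 : (ε : ℂ) ^ (2 * m) ≠ 0 := pow_ne_zero _ h2
        apply mul_left_cancel₀ h4
        rw [← h3]
        change -2 * (P ε).coeff (n-2) = _
        rw [h1, show m * (n - (n-2)) = 2 * m by rw [show n - (n-2) = 2 by omega]; ring]
        ring
      intro hz
      rw [hz] at this
      exact hg0 (by simpa using this)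

theorem Good.mul {P Q : ℝ → ℂ[X]} (hP : Good P) (hQ : Good Q) : Good (fun ε => P ε * Q ε) := by
  obtain ⟨L, hL, h1⟩ := hP
  obtain ⟨M, hM, h2⟩ := hQ
  refine ⟨L + M, ?_, ?_⟩
  · intro f hf
    rcases Multiset.mem_add.1 hf with h | h
    exacts [hL f h, hM f h]
  · filter_upwards [h1, h2] with ε e1 e2
    rw [e1, e2, Multiset.map_add, Multiset.prod_add]

theorem Good.congr {P Q : ℝ → ℂ[X]} (hP : Good P) (h : ∀ᶠ ε in 𝓝 (0:ℝ), Q ε = P ε) : Good Q := by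
  obtain ⟨L, hL, h1⟩ := hP
  refine ⟨L, hL, ?_⟩
  filter_upwards [h1, h] with ε e1 e2
  rw [e2, e1]

theorem Good.scale {Q : ℝ → ℂ[X]} (hQ : Good Q) (m : ℕ) :
    Good (fun ε => (Q ε).scaleRoots ((ε : ℂ) ^ m)) := by
  obtain ⟨L, hL, h1⟩ := hQ
  refine ⟨L.map (fun f ε => (ε : ℂ) ^ m * f ε), ?_, ?_⟩
  · intro f hf
    obtain ⟨g, hg, rfl⟩ := Multiset.mem_map.1 hf
    exact ((Complex.ofRealCLM.analyticAt 0).pow _).mul (hL g hg)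
  · filter_upwards [h1] with ε e1
    rw [e1]
    clear h1 hL e1
    induction L using Multiset.induction_on with
    | empty => simp
    | cons a s ih =>
      simp only [Multiset.map_cons, Multiset.prod_cons] at ih ⊢
      rw [mul_scaleRoots_of_noZeroDivisors, ih, X_sub_C_scaleRoots, mul_comm (a ε)]

theorem Good.shift {P : ℝ → ℂ[X]} {c : ℝ → ℂ} (hc : AnalyticAt ℝ c 0)
    (h : Good (fun ε => (P ε).comp (X + C (c ε)))) : Good P := by
  obtain ⟨L, hL, h1⟩ := h
  refine ⟨L.map (fun f ε => f ε + c ε), ?_, ?_⟩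
  · intro f hf
    obtain ⟨g, hg, rfl⟩ := Multiset.mem_map.1 hf
    exact (hL g hg).add hc
  · filter_upwards [h1] with ε e1
    have : P ε = ((P ε).comp (X + C (c ε))).comp (X - C (c ε)) := by
      rw [comp_assoc]; simp
    rw [this, e1, multiset_prod_comp, Multiset.map_map, Multiset.map_map]
    congr 1
    refine Multiset.map_congr rfl fun f _ => ?_
    simp
    ring

theorem real_of_dvd {n a : ℕ} {Q U V : ℝ → ℂ[X]} (hQ : Fam n Q) (hU : AnP U) (hm : ∀ ε, (U ε).Monic)
    (hd : ∀ ε, (U ε).natDegree = a) (h : ∀ᶠ ε in 𝓝 (0:ℝ), Q ε = U ε * V ε) : Fam a U := by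
  refine ⟨hU, hm, hd, ?_⟩
  filter_upwards [hQ.real, h.filter_mono nhdsWithin_le_nhds] with ε h1 h2 z hz
  refine h1 z ?_
  rw [h2]
  exact root_mul_right_of_isRoot _ hz

theorem main_poly (n : ℕ) : ∀ P, Fam n P → Good P := by
  induction n using Nat.strong_induction_on with
  | _ n ih =>
  intro P hP
  rcases Nat.lt_or_ge n 2 with hn | hn
  · interval_cases n
    · refine ⟨0, by simp, .of_forall fun ε => ?_⟩
      simpa using (hP.monic ε).natDegree_eq_zero.1 (hP.deg ε)
    · refine ⟨{fun ε => -(P ε).coeff 0}, ?_, .of_forall fun ε => ?_⟩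
      · intro f hf
        rw [Multiset.mem_singleton.1 hf]
        exact (hP.an 0).neg
      · simpa using (hP.monic ε).eq_X_add_C (hP.deg ε)
  let c : ℝ → ℂ := fun ε => -(P ε).coeff (n-1) / n
  have hcan : AnalyticAt ℝ c 0 := (hP.an (n-1)).neg.div_const
  refine Good.shift hcan ?_
  have hn0 : (n : ℂ) ≠ 0 := by exact_mod_cast (by omega : n ≠ 0)
  have hsum : ∀ ε, (P ε).roots.sum = n * c ε := by
    intro ε
    have := (IsAlgClosed.splits (P ε)).nextCoeff_eq_neg_sum_roots_of_monic (hP.monic ε)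
    rw [nextCoeff_of_natDegree_pos (by rw [hP.deg]; omega), hP.deg] at this
    simp only [c]
    rw [this]; field_simp
  have hP' : Fam n (fun ε => (P ε).comp (X + C (c ε))) := by
    refine ⟨hP.an.comp hP.deg ((anP_const X).add (anP_C hcan)), fun ε => (hP.monic ε).comp_X_add_C _,
      fun ε => by rw [natDegree_comp, natDegree_X_add_C, mul_one, hP.deg], ?_⟩
    filter_upwards [hP.real] with ε hε z hz
    have h1 : (z + c ε).im = 0 := hε _ (by simpa [IsRoot] using hz)
    have h2 : (P ε).roots.sum.im = 0 := by
      have : ∀ s : Multiset ℂ, (∀ z ∈ s, z.im = 0) → s.sum.im = 0 := by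
        intro s
        induction s using Multiset.induction_on with
        | empty => simp
        | cons a s ih => intro h; simp [h a, ih fun z hz => h z (by simp [hz])]
      exact this _ fun z hz => hε z (isRoot_of_mem_roots hz)
    rw [hsum] at h2
    have h3 : (c ε).im = 0 := by
      have : (n : ℝ) ≠ 0 := by exact_mod_cast hn0
      simpa [this] using h2
    simpa [h3] using h1
  have hcen : ∀ ε, ((P ε).comp (X + C (c ε))).coeff (n-1) = 0 := by
    intro ε
    have hs := (IsAlgClosed.splits (P ε)).eq_prod_roots_of_monic (hP.monic ε)
    have hcard : (P ε).roots.card = n := by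
      rw [← hP.deg ε]; exact (IsAlgClosed.splits (P ε)).natDegree_eq_card_roots.symm
    have e : (P ε).comp (X + C (c ε)) =
        (((P ε).roots.map (fun z => z - c ε)).map (fun z => X - C z)).prod := by
      conv_lhs => rw [hs]
      rw [multiset_prod_comp, Multiset.map_map, Multiset.map_map]
      congr 1
      refine Multiset.map_congr rfl fun f _ => ?_
      simp
      ring
    rw [e]
    have := multiset_prod_X_sub_C_coeff_card_pred ((P ε).roots.map (fun z => z - c ε))
      (by rw [Multiset.card_map, hcard]; omega)
    rw [Multiset.card_map, hcard] at this
    rw [this, Multiset.sum_map_sub, Multiset.map_id', hsum]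
    simp [hcard]
  have hcen' : ∀ ε, ((fun ε => (P ε).comp (X + C (c ε))) ε).coeff (n-1) = 0 := hcen
  clear hcen
  generalize (fun ε => (P ε).comp (X + C (c ε))) = R at *
  rcases centered_step hn hP' hcen' with h | ⟨m, Q, hQ, hQm, hQd, hPQ, hQ1, hQ2⟩
  · refine ⟨Multiset.replicate n (fun _ => 0), ?_, ?_⟩
    · intro f hf
      rw [Multiset.eq_of_mem_replicate hf]
      exact analyticAt_const
    · filter_upwards [h] with ε e
      rw [e]; simp
  refine (Good.scale (Q := Q) ?_ m).congr hPQ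
  have hQF : Fam n Q := by
    refine ⟨hQ, hQm, hQd, ?_⟩
    filter_upwards [hP'.real, hPQ.filter_mono nhdsWithin_le_nhds, self_mem_nhdsWithin]
      with ε h1 h2 h3 z hz
    have h3 : ε ≠ 0 := h3
    have := h1 ((ε : ℂ) ^ m * z) (by
      rw [h2, IsRoot, scaleRoots_eval_mul, hz.eq_zero, mul_zero])
    rw [← Complex.ofReal_pow, Complex.im_ofReal_mul] at this
    exact (mul_eq_zero.1 this).resolve_left (pow_ne_zero _ h3)
  obtain ⟨r, hr⟩ := IsAlgClosed.exists_root (Q 0) (by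
    rw [degree_eq_natDegree (hQm 0).ne_zero, hQd]
    exact_mod_cast (by omega : n ≠ 0))
  obtain ⟨v, hv, hnd⟩ := exists_eq_pow_rootMultiplicity_mul_and_not_dvd (Q 0) (hQm 0).ne_zero r
  set a := (Q 0).rootMultiplicity r with ha
  have hapos : 0 < a := (rootMultiplicity_pos (hQm 0).ne_zero).2 hr
  have hum : ((X - C r) ^ a).Monic := (monic_X_sub_C r).pow a
  have hvm : v.Monic := by
    have := hQm 0
    rw [hv] at this
    exact hum.of_mul_monic_left this
  have hud : ((X - C r) ^ a).natDegree = a := by simp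
  have hadd : n = a + v.natDegree := by
    rw [← hQd 0, hv, hum.natDegree_mul hvm, hud]
  have hvpos : 0 < v.natDegree := by
    by_contra hcon
    have hv1 : v = 1 := hvm.natDegree_eq_zero.1 (by omega)
    have han : a = n := by rw [hadd, hv1]; simp
    rw [hv1, mul_one, han] at hv
    have e : (X - C r) ^ n = ((Multiset.replicate n r).map (fun z => X - C z)).prod := by simp
    have e1 := multiset_prod_X_sub_C_coeff_card_pred (Multiset.replicate n r) (by simp; omega)
    rw [← e, ← hv, Multiset.card_replicate, hQ1, Multiset.sum_replicate] at e1
    have hr0 : r = 0 := by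
      have : (n : ℂ) * r = 0 := by simpa using e1.symm
      exact (mul_eq_zero.1 this).resolve_left hn0
    rw [hv, hr0] at hQ2
    apply hQ2
    simp [coeff_X_pow]
    omega
  have hcop : IsCoprime ((X - C r) ^ a) v :=
    IsCoprime.pow_left (((irreducible_X_sub_C r).coprime_iff_not_dvd).2 hnd)
  obtain ⟨U, V, hU, hV, hUm, hVm, hUd, hVd, hUV⟩ := hensel hum hvm hud rfl hcop hQ hQm
    (fun ε => by rw [hQd, ← hadd]) hv
  have gU := ih a (by omega) U (real_of_dvd hQF hU hUm hUd hUV)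
  have gV := ih v.natDegree (by omega) V (real_of_dvd hQF hV hVm hVd
    (hUV.mono fun ε h => by rw [h, mul_comm]) )
  exact (gU.mul gV).congr hUV

theorem enum_aux {α : Type*} (s : Multiset α) (n : ℕ) (h : s.card = n) :
    ∃ F : Fin n → α, s = ∑ k, {F k} := by
  subst h
  obtain ⟨l, rfl⟩ := Quot.exists_rep s
  refine ⟨l.get, ?_⟩
  have := Multiset.sum_map_singleton (Multiset.map l.get Finset.univ.val)
  rw [Multiset.map_map] at this
  refine Eq.trans ?_ this.symm
  rw [Fin.univ_val_map, List.ofFn_get]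
  rfl

theorem charpoly_fam {d : ℕ} (M₀ M₁ : Matrix (Fin d) (Fin d) ℂ)
    (hM₀ : M₀.IsHermitian) (hM₁ : M₁.IsHermitian) :
    Fam d (fun ε : ℝ => (M₀ + (ε : ℂ) • M₁).charpoly) ∧
    ∀ ε : ℝ, ∀ z ∈ (M₀ + (ε : ℂ) • M₁).charpoly.roots, z.im = 0 := by
  have hr : ∀ ε : ℝ, ∀ z ∈ (M₀ + (ε : ℂ) • M₁).charpoly.roots, z.im = 0 := by
    intro ε z hz
    have hH : (M₀ + (ε : ℂ) • M₁).IsHermitian := by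
      refine hM₀.add ?_
      rw [Matrix.IsHermitian, Matrix.conjTranspose_smul, hM₁.eq]
      simp
    rw [hH.roots_charpoly_eq_eigenvalues] at hz
    obtain ⟨i, _, rfl⟩ := Multiset.mem_map.1 hz
    simp
  refine ⟨⟨?_, fun ε => Matrix.charpoly_monic _, fun ε => by
    rw [Matrix.charpoly_natDegree_eq_dim]; simp, ?_⟩, hr⟩
  · simp only [Matrix.charpoly, Matrix.det_apply]
    refine AnP.sum _ fun σ _ => ?_
    have : AnP (fun ε : ℝ => ∏ i, Matrix.charmatrix (M₀ + (ε : ℂ) • M₁) (σ i) i) := by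
      refine AnP.prod _ fun i _ => ?_
      simp only [Matrix.charmatrix_apply]
      refine (anP_const _).sub (anP_C ?_)
      exact analyticAt_const.add ((Complex.ofRealCLM.analyticAt 0).mul analyticAt_const)
    rcases Int.units_eq_one_or (Equiv.Perm.sign σ) with h | h
    · simpa [h] using this
    · simpa [h] using (anP_const 0).sub this
  · refine .of_forall fun ε z hz => hr ε z ?_
    exact (mem_roots (Matrix.charpoly_monic _).ne_zero).2 hz

/-- Analytic perturbation theory for Hermitian matrices (item (I) of Appendix A4): if
`M₀` is Hermitian with distinct eigenvalues `λ₁ < ⋯ < λ_p` of multiplicities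
`n₁, …, n_p` and `M₁` is Hermitian, then for small `ε` the eigenvalues of `M₀ + ε M₁`
are given by real-analytic branches `λ_{j,k}(ε)` with `λ_{j,k}(0) = λ_j`, and branches
coming from the same unperturbed eigenvalue stay within `C|ε|` of each other. -/
theorem hermitian_analytic_eigenvalue_branches
    (d p : ℕ) (n : Fin p → ℕ) (hsum : ∑ j, n j = d)
    (lam : Fin p → ℝ) (hlam : StrictMono lam)
    (M₀ M₁ : Matrix (Fin d) (Fin d) ℂ)
    (hM₀ : M₀.IsHermitian) (hM₁ : M₁.IsHermitian)
    (hroots : M₀.charpoly.roots = ∑ j, Multiset.replicate (n j) ((lam j : ℝ) : ℂ)) :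
    ∃ (ε₀ C : ℝ), 0 < ε₀ ∧ 0 < C ∧
      ∃ Λ : (j : Fin p) → Fin (n j) → ℝ → ℝ,
        (∀ j k, AnalyticOnNhd ℝ (Λ j k) (Set.Ioo (-ε₀) ε₀)) ∧
        (∀ j k, Λ j k 0 = lam j) ∧
        ∀ ε ∈ Set.Ioo (-ε₀) ε₀,
          (M₀ + (ε : ℂ) • M₁).charpoly.roots
              = ∑ j, ∑ k : Fin (n j), ({((Λ j k ε : ℝ) : ℂ)} : Multiset ℂ) ∧
          ∀ j, ∀ k k' : Fin (n j), |Λ j k ε - Λ j k' ε| ≤ C * |ε| := by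
  classical
  obtain ⟨hF, hreal⟩ := charpoly_fam M₀ M₁ hM₀ hM₁
  obtain ⟨L, hL, hLr⟩ := main_poly d _ hF
  have hroot : ∀ᶠ ε : ℝ in 𝓝 (0:ℝ), (M₀ + (ε : ℂ) • M₁).charpoly.roots = L.map (fun f => f ε) := by
    filter_upwards [hLr] with ε e
    have : (L.map (fun f => X - C (f ε))).prod = ((L.map (fun f => f ε)).map (fun z => X - C z)).prod := by
      rw [Multiset.map_map]; rfl
    rw [e, this, roots_multiset_prod_X_sub_C]
  have h0 : L.map (fun f => f 0) = ∑ j, Multiset.replicate (n j) ((lam j : ℝ) : ℂ) := by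
    rw [← hroot.self_of_nhds, ← hroots]; simp
  have hinj : ∀ i j, ((lam i : ℝ) : ℂ) = (lam j : ℂ) ↔ i = j := by
    intro i j
    rw [Complex.ofReal_inj, hlam.injective.eq_iff]
  have hcard : ∀ j, (L.filter (fun f => f 0 = (lam j : ℂ))).card = n j := by
    intro j
    have : Multiset.count (lam j : ℂ) (L.map (fun f => f 0)) = n j := by
      rw [h0, Multiset.count_sum']
      simp [Multiset.count_replicate, hinj]
    rw [← this, Multiset.count_map]
    congr 1
    exact Multiset.filter_congr fun f _ => eq_comm
  have hLsum : L = ∑ j, L.filter (fun f => f 0 = (lam j : ℂ)) := by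
    ext f
    rw [Multiset.count_sum']
    simp only [Multiset.count_filter]
    by_cases hf : f ∈ L
    · have : f 0 ∈ L.map (fun f => f 0) := Multiset.mem_map_of_mem _ hf
      rw [h0, Multiset.mem_sum] at this
      obtain ⟨j, _, hj⟩ := this
      have hj := Multiset.eq_of_mem_replicate hj
      simp [hj, hinj]
    · simp [Multiset.count_eq_zero_of_notMem hf]
  choose F hFs using fun j => enum_aux _ _ (hcard j)
  have hmem : ∀ j k, F j k ∈ L ∧ F j k 0 = (lam j : ℂ) := by
    intro j k
    have : F j k ∈ L.filter (fun f => f 0 = (lam j : ℂ)) := by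
      rw [hFs j, Multiset.mem_sum]
      exact ⟨k, Finset.mem_univ _, by simp⟩
    exact Multiset.mem_filter.1 this
  have han : ∀ j k, AnalyticAt ℝ (fun ε => (F j k ε).re) 0 := fun j k =>
    (Complex.reCLM.analyticAt _).comp (hL _ (hmem j k).1)
  have hbd : ∀ j k, ∃ c : ℝ, 0 < c ∧ ∀ᶠ ε in 𝓝 (0:ℝ), |(F j k ε).re - lam j| ≤ c * |ε| := by
    intro j k
    obtain ⟨c, hc, h⟩ := (han j k).differentiableAt.isBigO_sub.exists_pos
    refine ⟨c, hc, ?_⟩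
    filter_upwards [h.bound] with ε e
    simpa [(hmem j k).2] using e
  choose c hc hcb using hbd
  have hev : ∀ᶠ ε : ℝ in 𝓝 (0:ℝ), (∀ j k, AnalyticAt ℝ (fun ε => (F j k ε).re) ε) ∧
      (∀ j k, |(F j k ε).re - lam j| ≤ c j k * |ε|) ∧
      (M₀ + (ε : ℂ) • M₁).charpoly.roots = L.map (fun f => f ε) := by
    refine Filter.Eventually.and ?_ (Filter.Eventually.and ?_ hroot)
    · exact Filter.eventually_all.2 fun j => Filter.eventually_all.2 fun k =>
        (han j k).eventually_analyticAt
    · exact Filter.eventually_all.2 fun j => Filter.eventually_all.2 fun k => hcb j k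
  obtain ⟨ε₀, hε₀, hall⟩ := Metric.eventually_nhds_iff.1 hev
  have hmemI : ∀ ε ∈ Set.Ioo (-ε₀) ε₀, dist ε 0 < ε₀ := by
    intro ε hε
    rw [Real.dist_eq, sub_zero]
    exact abs_lt.2 hε
  set T : ℝ := ∑ j, ∑ k, c j k with hT
  have hcT : ∀ j k, c j k ≤ T := by
    intro j k
    have h1 : c j k ≤ ∑ k, c j k :=
      Finset.single_le_sum (f := fun k => c j k) (fun k _ => (hc j k).le) (Finset.mem_univ k)
    have h2 : ∑ k, c j k ≤ T := Finset.single_le_sum (f := fun j => ∑ k, c j k)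
      (fun j _ => Finset.sum_nonneg fun k _ => (hc j k).le) (Finset.mem_univ j)
    exact h1.trans h2
  have hT0 : 0 ≤ T := Finset.sum_nonneg fun j _ => Finset.sum_nonneg fun k _ => (hc j k).le
  refine ⟨ε₀, 2 * T + 1, hε₀, by positivity, fun j k ε => (F j k ε).re, ?_, ?_, ?_⟩
  · intro j k ε hε
    exact (hall (hmemI ε hε)).1 j k
  · intro j k
    simp [(hmem j k).2]
  · intro ε hε
    obtain ⟨_, h2, h3⟩ := hall (hmemI ε hε)
    refine ⟨?_, ?_⟩
    · have hre : ∀ j k, (((F j k ε).re : ℝ) : ℂ) = F j k ε := by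
        intro j k
        have : (F j k ε).im = 0 := by
          refine hreal ε _ ?_
          rw [h3]
          exact Multiset.mem_map_of_mem (fun f : ℝ → ℂ => f ε) (hmem j k).1
        exact Complex.ext rfl (by simp [this])
      rw [h3]
      conv_lhs => rw [hLsum]
      simp only [hre]
      have hm := map_sum (Multiset.mapAddMonoidHom (fun f : ℝ → ℂ => f ε))
        (fun j => L.filter (fun f => f 0 = (lam j : ℂ))) Finset.univ
      simp only [Multiset.coe_mapAddMonoidHom] at hm
      rw [hm]
      refine Finset.sum_congr rfl fun j _ => ?_
      rw [hFs j]
      have hm2 := map_sum (Multiset.mapAddMonoidHom (fun f : ℝ → ℂ => f ε))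
        (fun k => ({F j k} : Multiset (ℝ → ℂ))) Finset.univ
      simp only [Multiset.coe_mapAddMonoidHom, Multiset.map_singleton] at hm2
      exact hm2
    · intro j k k'
      have e1 := h2 j k
      have e2 := h2 j k'
      have e3 : |(F j k ε).re - (F j k' ε).re| ≤ |(F j k ε).re - lam j| + |(F j k' ε).re - lam j| := by
        have := abs_sub ((F j k ε).re - lam j) ((F j k' ε).re - lam j)
        simpa using this
      have e4 : c j k * |ε| ≤ T * |ε| := by gcongr; exact hcT j k
      have e5 : c j k' * |ε| ≤ T * |ε| := by gcongr; exact hcT j k'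
      have := abs_nonneg ε
      calc _ ≤ _ := e3
        _ ≤ T * |ε| + T * |ε| := by linarith
        _ ≤ (2 * T + 1) * |ε| := by linarith
end

section
/- Let d = r + s with r, s ≥ 1, let M̂ be a d×d Hermitian matrix whose eigenvalue 0 has multiplicity r and whose remaining eigenvalues 0 < a₁ < ⋯ < a_s are simple, and let Γ > 0. Then there exist C > 0 and ε̄ > 0 such that for every ε ∈ (0, ε̄) and every d×d Hermitian matrix M₁ with ‖M₁‖ ≤ Γ, the matrix ε M̂ + ε² M₁ has exactly r eigenvalues (counted with multiplicity) in the interval [−Cε², Cε²] and, for each j = 1, …, s, exactly one (simple) eigenvalue in [ε a_j − Cε², ε a_j + Cε²]; moreover these s + 1 intervals are pairwise disjoint and contain all eigenvalues of ε M̂ + ε² M₁. -/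
/-- The ℓ²-operator norm of a complex matrix. -/
noncomputable def matOpNorm {m n : Type*} [Fintype m] [Fintype n] [DecidableEq n]
    (M : Matrix m n ℂ) : ℝ :=
  ‖LinearMap.toContinuousLinearMap (Matrix.toEuclideanLin (𝕜 := ℂ) M)‖

open Matrix in
lemma aux_finrank_le {d : ℕ} (B : Matrix (Fin d) (Fin d) ℂ) (hB : B.IsHermitian) (c δ : ℝ)
    (hδ : 0 ≤ δ) (V : Submodule ℂ (EuclideanSpace ℂ (Fin d)))
    (hV : ∀ v ∈ V, ‖Matrix.toEuclideanLin (𝕜 := ℂ) B v - (c : ℂ) • v‖ ≤ δ * ‖v‖) :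
    Module.finrank ℂ V ≤
      (Finset.univ.filter fun k : Fin d => c - δ ≤ hB.eigenvalues k ∧
        hB.eigenvalues k ≤ c + δ).card := by
  classical
  set S := Finset.univ.filter fun k : Fin d => c - δ ≤ hB.eigenvalues k ∧
        hB.eigenvalues k ≤ c + δ with hS
  let b := hB.eigenvectorBasis
  let φ : V →ₗ[ℂ] (S → ℂ) :=
    { toFun := fun v k => b.repr v.1 k.1
      map_add' := by intro x y; ext k; simp
      map_smul' := by intro x y; ext k; simp }
  have hcoef : ∀ (v : EuclideanSpace ℂ (Fin d)) k,
      b.repr (Matrix.toEuclideanLin (𝕜 := ℂ) B v - (c : ℂ) • v) k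
        = ((hB.eigenvalues k - c : ℝ) : ℂ) * b.repr v k := by
    intro v k
    have hsym : (Matrix.toEuclideanLin (𝕜 := ℂ) B).IsSymmetric :=
      Matrix.isSymmetric_toEuclideanLin_iff.2 hB
    have he : Matrix.toEuclideanLin (𝕜 := ℂ) B (b k) = (hB.eigenvalues k : ℂ) • b k := by
      have := hB.mulVec_eigenvectorBasis k
      ext i
      have := congrFun this i
      simpa [Matrix.toLpLin_apply] using this
    rw [OrthonormalBasis.repr_apply_apply, OrthonormalBasis.repr_apply_apply, inner_sub_right,
      ← hsym, he, inner_smul_left, inner_smul_right]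
    simp
    ring
  have hinj : Function.Injective φ := by
    rw [injective_iff_map_eq_zero]
    rintro ⟨v, hv⟩ h0
    have hz : ∀ k ∈ S, b.repr v k = 0 := fun k hk => congrFun h0 ⟨k, hk⟩
    have h1 := hV v hv
    have h2 : ‖b.repr (Matrix.toEuclideanLin (𝕜 := ℂ) B v - (c : ℂ) • v)‖ ^ 2
        ≤ δ ^ 2 * ‖b.repr v‖ ^ 2 := by
      rw [LinearIsometryEquiv.norm_map, LinearIsometryEquiv.norm_map, ← mul_pow]
      gcongr
    rw [EuclideanSpace.norm_sq_eq, EuclideanSpace.norm_sq_eq, Finset.mul_sum] at h2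
    have hall : ∀ k, b.repr v k = 0 := by
      by_contra! hne
      obtain ⟨k, hk⟩ := hne
      have key : ∀ k, k ∉ S → δ ^ 2 < (hB.eigenvalues k - c) ^ 2 := by
        intro k hk
        rw [sq_lt_sq, abs_of_nonneg hδ]
        by_contra! hle
        rw [abs_le] at hle
        exact hk (by simp only [hS, Finset.mem_filter, Finset.mem_univ, true_and]
                     constructor <;> linarith)
      refine absurd h2 (not_le.2 (Finset.sum_lt_sum (fun i _ => ?_) ⟨k, Finset.mem_univ _, ?_⟩))
      · rw [hcoef, norm_mul, mul_pow, Complex.norm_real, Real.norm_eq_abs, sq_abs]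
        by_cases hi : i ∈ S
        · simp [hz i hi]
        · have := key i hi
          gcongr
      · rw [hcoef, norm_mul, mul_pow, Complex.norm_real, Real.norm_eq_abs, sq_abs]
        have := key k (fun hi => hk (hz k hi))
        have : 0 < ‖b.repr v k‖ := norm_pos_iff.2 hk
        gcongr
    have : b.repr v = 0 := by ext k; simpa using hall k
    simpa using this
  simpa using LinearMap.finrank_le_finrank_of_injective hinj

lemma aux_count {d : ℕ} (A : Matrix (Fin d) (Fin d) ℂ) (hA : A.IsHermitian) (c : ℝ) :
    ∃ S : Finset (Fin d), A.charpoly.roots.count (c : ℂ) = S.card ∧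
      ∀ k ∈ S, hA.eigenvalues k = c := by
  classical
  refine ⟨Finset.univ.filter fun k => hA.eigenvalues k = c, ?_, fun k hk => by simpa using hk⟩
  rw [hA.roots_charpoly_eq_eigenvalues, Multiset.count_map,
    Finset.card_def, Finset.filter_val]
  refine congrArg Multiset.card (Multiset.filter_congr ?_)
  intro x _
  simp [eq_comm]

lemma aux_mem {d : ℕ} (A : Matrix (Fin d) (Fin d) ℂ) (hA : A.IsHermitian) (k : Fin d) :
    Matrix.toEuclideanLin (𝕜 := ℂ) A (hA.eigenvectorBasis k)
      = (hA.eigenvalues k : ℂ) • hA.eigenvectorBasis k := by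
  have := hA.mulVec_eigenvectorBasis k
  ext i
  have := congrFun this i
  simpa [Matrix.toLpLin_apply] using this

lemma aux_exists_V {d : ℕ} (A : Matrix (Fin d) (Fin d) ℂ) (hA : A.IsHermitian) (c : ℝ) (n : ℕ)
    (hn : n ≤ A.charpoly.roots.count (c : ℂ)) :
    ∃ V : Submodule ℂ (EuclideanSpace ℂ (Fin d)), n ≤ Module.finrank ℂ V ∧
      ∀ v ∈ V, Matrix.toEuclideanLin (𝕜 := ℂ) A v = (c : ℂ) • v := by
  obtain ⟨S, hcard, hS⟩ := aux_count A hA c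
  have hli : LinearIndependent ℂ (fun k : S => hA.eigenvectorBasis k.1) :=
    hA.eigenvectorBasis.orthonormal.linearIndependent.comp (fun k : S => k.1)
      Subtype.val_injective
  refine ⟨Submodule.span ℂ (Set.range (fun k : S => hA.eigenvectorBasis k.1)), ?_, ?_⟩
  · rw [finrank_span_eq_card hli, Fintype.card_coe, ← hcard]
    exact hn
  · intro v hv
    induction hv using Submodule.span_induction with
    | mem x h =>
      obtain ⟨k, rfl⟩ := h
      have := aux_mem A hA k.1
      rw [hS k.1 k.2] at this
      exact this
    | zero => simp
    | add x y _ _ hx hy => rw [map_add, hx, hy, smul_add]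
    | smul t x _ hx => rw [map_smul, hx, smul_comm]

/-- Item (II)(i) of Appendix A4: if `M̂` is Hermitian with eigenvalue `0` of multiplicity
`r` and simple eigenvalues `0 < a₁ < ⋯ < a_s`, and `‖M₁‖ ≤ Γ` is Hermitian, then for `ε`
small the matrix `ε M̂ + ε² M₁` has exactly `r` eigenvalues within `Cε²` of `0` and one
simple eigenvalue within `Cε²` of each `ε a_j`, with the `s + 1` intervals pairwise
disjoint and containing all the eigenvalues. -/
theorem hermitian_perturbed_eigenvalue_location
    (r s d : ℕ) (hr : 1 ≤ r) (hs : 1 ≤ s) (hd : d = r + s)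
    (Mhat : Matrix (Fin d) (Fin d) ℂ) (hMhat : Mhat.IsHermitian)
    (a : Fin s → ℝ) (hmono : StrictMono a) (hpos : ∀ j, 0 < a j)
    (hroots : Mhat.charpoly.roots
      = Multiset.replicate r 0 + ∑ j, ({((a j : ℝ) : ℂ)} : Multiset ℂ))
    (Γ : ℝ) (hΓ : 0 < Γ) :
    ∃ C εbar : ℝ, 0 < C ∧ 0 < εbar ∧
      ∀ ε ∈ Set.Ioo (0 : ℝ) εbar,
      ∀ M₁ : Matrix (Fin d) (Fin d) ℂ, M₁.IsHermitian → matOpNorm M₁ ≤ Γ →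
      ∀ hM : ((ε : ℂ) • Mhat + (ε : ℂ) ^ 2 • M₁).IsHermitian,
        (Finset.univ.filter fun k : Fin d =>
          -(C * ε ^ 2) ≤ hM.eigenvalues k ∧ hM.eigenvalues k ≤ C * ε ^ 2).card = r ∧
        (∀ j : Fin s, (Finset.univ.filter fun k : Fin d =>
          ε * a j - C * ε ^ 2 ≤ hM.eigenvalues k ∧
            hM.eigenvalues k ≤ ε * a j + C * ε ^ 2).card = 1) ∧
        (∀ j : Fin s, Disjoint (Set.Icc (-(C * ε ^ 2)) (C * ε ^ 2))
          (Set.Icc (ε * a j - C * ε ^ 2) (ε * a j + C * ε ^ 2))) ∧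
        (∀ j j' : Fin s, j ≠ j' →
          Disjoint (Set.Icc (ε * a j - C * ε ^ 2) (ε * a j + C * ε ^ 2))
            (Set.Icc (ε * a j' - C * ε ^ 2) (ε * a j' + C * ε ^ 2))) ∧
        (∀ k : Fin d,
          (-(C * ε ^ 2) ≤ hM.eigenvalues k ∧ hM.eigenvalues k ≤ C * ε ^ 2) ∨
          ∃ j : Fin s, ε * a j - C * ε ^ 2 ≤ hM.eigenvalues k ∧
            hM.eigenvalues k ≤ ε * a j + C * ε ^ 2) := by
  classical
  let g : Option (Fin s) → ℝ := fun o => o.elim 0 a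
  let m : Option (Fin s) → ℕ := fun o => o.elim r (fun _ => 1)
  have hg : Function.Injective g := by
    rintro (_ | i) (_ | j) h
    · rfl
    · exact absurd h (hpos j).ne
    · exact absurd h (hpos i).ne'
    · exact congrArg some (hmono.injective h)
  have hm : ∀ o, m o ≤ Mhat.charpoly.roots.count (g o : ℂ) := by
    intro o
    rw [hroots, Multiset.count_add]
    rcases o with _ | j
    · simp [g, m]
    · refine le_add_left ?_
      simp only [g, m, Option.elim, Multiset.count_sum']
      refine le_trans ?_ (Finset.single_le_sum (f := fun x =>
        Multiset.count ((a j : ℝ) : ℂ) {((a x : ℝ) : ℂ)}) (fun _ _ => Nat.zero_le _)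
        (Finset.mem_univ j))
      simp
  have hev : ∀ᶠ ε : ℝ in nhdsWithin 0 (Set.Ioi 0),
      ∀ o o' : Option (Fin s), o ≠ o' → 2 * Γ * ε < |g o - g o'| := by
    refine Filter.eventually_all.2 fun o => Filter.eventually_all.2 fun o' => ?_
    by_cases h : o = o'
    · exact Filter.Eventually.of_forall fun _ h' => absurd h h'
    · have hp : 0 < |g o - g o'| := abs_pos.2 (sub_ne_zero.2 fun h' => h (hg h'))
      have ht : Filter.Tendsto (fun ε : ℝ => 2 * Γ * ε) (nhdsWithin 0 (Set.Ioi 0)) (nhds 0) := by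
        have : Continuous (fun ε : ℝ => 2 * Γ * ε) := by fun_prop
        simpa using (this.tendsto 0).mono_left nhdsWithin_le_nhds
      filter_upwards [ht.eventually (gt_mem_nhds hp)] with ε hε _ using hε
  obtain ⟨εbar, hεbar, hsub⟩ := mem_nhdsGT_iff_exists_Ioo_subset.1 hev
  refine ⟨Γ, εbar, hΓ, hεbar, ?_⟩
  intro ε hε M₁ hM₁ hnorm hM
  have hgap := hsub hε
  have hε0 : 0 < ε := hε.1
  have hdisj : ∀ o o' : Option (Fin s), o ≠ o' →
      Disjoint (Set.Icc (ε * g o - Γ * ε ^ 2) (ε * g o + Γ * ε ^ 2))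
        (Set.Icc (ε * g o' - Γ * ε ^ 2) (ε * g o' + Γ * ε ^ 2)) := by
    intro o o' h
    rw [Set.disjoint_left]
    rintro x ⟨h1, h2⟩ ⟨h3, h4⟩
    have h5 := mul_lt_mul_of_pos_left (hgap o o' h) hε0
    have h6 : ε * |g o - g o'| = |ε * g o - ε * g o'| := by
      rw [← mul_sub, abs_mul, abs_of_pos hε0]
    have h7 : |ε * g o - ε * g o'| ≤ 2 * (Γ * ε ^ 2) := by
      rw [abs_le]; constructor <;> linarith
    nlinarith
  let F : Option (Fin s) → Finset (Fin d) := fun o => Finset.univ.filter fun k : Fin d =>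
    ε * g o - Γ * ε ^ 2 ≤ hM.eigenvalues k ∧ hM.eigenvalues k ≤ ε * g o + Γ * ε ^ 2
  have hF : ∀ o, m o ≤ (F o).card := by
    intro o
    obtain ⟨V, hV, hVe⟩ := aux_exists_V Mhat hMhat (g o) (m o) (hm o)
    refine hV.trans (aux_finrank_le _ hM (ε * g o) (Γ * ε ^ 2) (by positivity) V ?_)
    intro v hv
    have h1 : Matrix.toEuclideanLin (𝕜 := ℂ) ((ε : ℂ) • Mhat + (ε : ℂ) ^ 2 • M₁) v
        - ((ε * g o : ℝ) : ℂ) • v = ((ε : ℂ) ^ 2) • Matrix.toEuclideanLin (𝕜 := ℂ) M₁ v := by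
      rw [map_add, map_smul, map_smul, LinearMap.add_apply, LinearMap.smul_apply,
        LinearMap.smul_apply, hVe v hv, smul_smul]
      push_cast
      abel
    rw [h1, norm_smul, norm_pow, Complex.norm_real, Real.norm_eq_abs, sq_abs]
    have h2 : ‖Matrix.toEuclideanLin (𝕜 := ℂ) M₁ v‖ ≤ Γ * ‖v‖ :=
      ((LinearMap.toContinuousLinearMap (Matrix.toEuclideanLin (𝕜 := ℂ) M₁)).le_opNorm v).trans
        (mul_le_mul_of_nonneg_right hnorm (norm_nonneg v))
    calc ε ^ 2 * ‖Matrix.toEuclideanLin (𝕜 := ℂ) M₁ v‖ ≤ ε ^ 2 * (Γ * ‖v‖) := by gcongr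
      _ = _ := by ring
  have hFd : ∀ o ∈ (Finset.univ : Finset (Option (Fin s))), ∀ o' ∈ Finset.univ, o ≠ o' →
      Disjoint (F o) (F o') := by
    intro o _ o' _ h
    rw [Finset.disjoint_left]
    intro k hk hk'
    simp only [F, Finset.mem_filter, Finset.mem_univ, true_and] at hk hk'
    exact Set.disjoint_left.1 (hdisj o o' h) hk hk'
  have hcard := Finset.card_biUnion hFd
  have hle : (Finset.univ.biUnion F).card ≤ d := by
    simpa using Finset.card_le_univ (Finset.univ.biUnion F)
  have hsm : ∑ o, m o = d := by
    rw [Fintype.sum_option]; simp [m, hd]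
  have hsl : ∑ o, m o ≤ ∑ o, (F o).card := Finset.sum_le_sum fun o _ => hF o
  have heq : ∀ o, m o = (F o).card := fun o =>
    (Finset.sum_eq_sum_iff_of_le (fun o _ => hF o)).1 (by omega) o (Finset.mem_univ o)
  have hun : Finset.univ.biUnion F = Finset.univ := by
    rw [← Finset.card_eq_iff_eq_univ, Fintype.card_fin]; omega
  refine ⟨?_, ?_, ?_, ?_, ?_⟩
  · refine Eq.trans (congrArg Finset.card ?_) (heq none).symm
    ext k
    simp only [F, g, Finset.mem_filter, Option.elim, mul_zero, zero_sub, zero_add]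
  · intro j
    refine Eq.trans (congrArg Finset.card ?_) (heq (some j)).symm
    ext k
    simp only [F, g, Finset.mem_filter]
    exact Iff.rfl
  · intro j
    simpa [g] using hdisj none (some j) (by simp)
  · intro j j' h
    simpa [g] using hdisj (some j) (some j') (by simpa using h)
  · intro k
    have hk : k ∈ Finset.univ.biUnion F := hun ▸ Finset.mem_univ k
    obtain ⟨o, -, ho⟩ := Finset.mem_biUnion.1 hk
    simp only [F, Finset.mem_filter, Finset.mem_univ, true_and] at ho
    rcases o with _ | j
    · left; simpa [g] using ho
    · right; exact ⟨j, ho⟩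
end

section
/- Let d = r + s with r, s ≥ 1, let M̂ be a d×d Hermitian matrix whose eigenvalue 0 has multiplicity r and whose remaining eigenvalues 0 < a₁ < ⋯ < a_s are simple, and let Γ > 0. Let (x, ε) ↦ M₁(x, ε) be a family of d×d Hermitian matrices defined for x ∈ ℝ and ε ∈ (0, ε'], continuously differentiable in (x, ε), with ‖M₁(x, ε)‖ ≤ Γ, ‖∂_x M₁(x, ε)‖ ≤ Γ and ‖∂_ε M₁(x, ε)‖ ≤ Γ everywhere. Then there exist C > 0 and ε̄ ∈ (0, ε'] such that for each j = 1, …, s there is a continuously differentiable function λ_j : ℝ × (0, ε̄) → ℝ with the following properties: for every (x, ε), λ_j(x, ε) is a simple eigenvalue of ε M̂ + ε² M₁(x, ε); |λ_j(x, ε) − ε a_j| ≤ Cε²; |∂_x λ_j(x, ε)| ≤ Cε²; and |∂_ε λ_j(x, ε)| ≤ C. -/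
open Filter Topology

theorem hfse_simple_iff {d : ℕ} (A : Matrix (Fin d) (Fin d) ℂ) (z : ℂ) :
    Multiset.count z A.charpoly.roots = 1 ↔
      A.charpoly.eval z = 0 ∧ A.charpoly.derivative.eval z ≠ 0 := by
  have h0 : A.charpoly ≠ 0 := A.charpoly_monic.ne_zero
  have h1 := Polynomial.one_lt_rootMultiplicity_iff_isRoot (t := z) h0
  have h2 := Polynomial.rootMultiplicity_pos (x := z) h0
  rw [Polynomial.count_roots]
  simp only [Polynomial.IsRoot] at h1 h2
  constructor
  · intro h
    refine ⟨h2.1 (by omega), fun h' => ?_⟩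
    have := h1.2 ⟨h2.1 (by omega), h'⟩
    omega
  · rintro ⟨ha, hb⟩
    have := h2.2 ha
    by_contra hne
    exact hb (h1.1 (by omega)).2

theorem hfse_eval {d : ℕ} (A : Matrix (Fin d) (Fin d) ℂ) (z : ℂ) :
    A.charpoly.eval z = (Matrix.scalar (Fin d) z - A).det := by
  rw [Matrix.eval_charpoly]

theorem hfse_scale {d : ℕ} (A : Matrix (Fin d) (Fin d) ℂ) (z c : ℂ) (hc : c ≠ 0)
    (h : Multiset.count z A.charpoly.roots = 1) :
    Multiset.count (c * z) (c • A).charpoly.roots = 1 := by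
  rw [hfse_simple_iff] at h ⊢
  have key : (c • A).charpoly.comp (Polynomial.C c * Polynomial.X)
      = Polynomial.C (c ^ d) * A.charpoly := by
    apply Polynomial.funext
    intro w
    simp only [Polynomial.eval_comp, Polynomial.eval_mul, Polynomial.eval_C, Polynomial.eval_X,
      hfse_eval]
    have : Matrix.scalar (Fin d) (c * w) - c • A = c • (Matrix.scalar (Fin d) w - A) := by
      rw [smul_sub]; congr 1
      ext i j
      simp [Matrix.diagonal_apply]
    rw [this, Matrix.det_smul, Fintype.card_fin]
  have e1 := congrArg (Polynomial.eval z) key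
  have e2 := congrArg (fun p => Polynomial.eval z (Polynomial.derivative p)) key
  simp [Polynomial.derivative_comp] at e1 e2
  refine ⟨by rw [e1, h.1, mul_zero], fun h' => ?_⟩
  rw [h', h.1, mul_zero, mul_zero, zero_add] at e2
  exact mul_ne_zero (pow_ne_zero d hc) h.2 e2.symm

theorem hfse_real {d : ℕ} {A : Matrix (Fin d) (Fin d) ℂ} (hA : A.IsHermitian) (z : ℂ)
    (h : A.charpoly.eval z = 0) : z.im = 0 := by
  have : z ∈ A.charpoly.roots := by
    rw [Polynomial.mem_roots A.charpoly_monic.ne_zero]; exact h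
  rw [hA.roots_charpoly_eq_eigenvalues] at this
  simp at this
  obtain ⟨i, hi⟩ := this
  rw [← hi]; simp

theorem hfse_local {d : ℕ} (M : Matrix (Fin d) (Fin d) ℂ) (a : ℝ)
    (hsimple : Multiset.count (a : ℂ) M.charpoly.roots = 1) :
    ∃ (h : (EuclideanSpace ℂ (Fin d) →L[ℂ] EuclideanSpace ℂ (Fin d)) → ℝ) (K : ℝ), 0 < K ∧
      h (Matrix.toEuclideanCLM (𝕜 := ℂ) M) = a ∧
      ∀ᶠ A in 𝓝 (Matrix.toEuclideanCLM (𝕜 := ℂ) M), ContDiffAt ℝ 1 h A ∧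
        ‖fderiv ℝ h A‖ ≤ K ∧
        (((Matrix.toEuclideanCLM (𝕜 := ℂ)).symm A).IsHermitian →
          Multiset.count ((h A : ℝ) : ℂ)
            ((Matrix.toEuclideanCLM (𝕜 := ℂ)).symm A).charpoly.roots = 1) := by
  set T := Matrix.toEuclideanCLM (𝕜 := ℂ) (n := Fin d) with hT
  let f : (EuclideanSpace ℂ (Fin d) →L[ℂ] EuclideanSpace ℂ (Fin d)) × ℂ → ℂ :=
    fun p => (T.symm p.1).charpoly.eval p.2
  have hcd : ContDiff ℂ 1 f := by
    have hf : f = fun p => (Matrix.scalar (Fin d) p.2 - T.symm p.1).det := by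
      ext p; exact hfse_eval _ _
    rw [hf]
    have hent : ∀ i j, ContDiff ℂ 1 (fun A : EuclideanSpace ℂ (Fin d) →L[ℂ]
        EuclideanSpace ℂ (Fin d) => T.symm A i j) := by
      intro i j
      let L : (EuclideanSpace ℂ (Fin d) →L[ℂ] EuclideanSpace ℂ (Fin d)) →ₗ[ℂ] ℂ :=
        { toFun := fun A => T.symm A i j
          map_add' := by intro A B; simp
          map_smul' := by intro c A; simp }
      exact (LinearMap.toContinuousLinearMap L).contDiff
    simp only [Matrix.det_apply]
    refine ContDiff.sum fun σ _ => ContDiff.const_smul _ (contDiff_prod fun i _ => ?_)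
    simp only [Matrix.sub_apply, Matrix.scalar_apply, Matrix.diagonal_apply]
    refine ContDiff.sub ?_ ((hent _ _).comp contDiff_fst)
    split_ifs
    · exact contDiff_snd
    · exact contDiff_const
  have hder : ∀ p, fderiv ℂ f p (0, 1) = (T.symm p.1).charpoly.derivative.eval p.2 := by
    intro p
    have h1 : HasFDerivAt f (fderiv ℂ f p) p :=
      (hcd.differentiable (by simp) p).hasFDerivAt
    have h2 : HasDerivAt (fun z : ℂ => (p.1, z)) ((0, 1) : _ × ℂ) p.2 :=
      (hasDerivAt_const _ _).prodMk (hasDerivAt_id _)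
    have h3 := HasFDerivAt.comp_hasDerivAt (x := p.2) (f := fun z : ℂ => (p.1, z)) h1 h2
    exact h3.unique ((T.symm p.1).charpoly.hasDerivAt p.2)
  have hdc : Continuous (fun p => fderiv ℂ f p (0, 1)) :=
    (hcd.continuous_fderiv (by simp)).clm_apply continuous_const
  let u : (EuclideanSpace ℂ (Fin d) →L[ℂ] EuclideanSpace ℂ (Fin d)) × ℂ := (T M, (a : ℂ))
  have hs := (hfse_simple_iff M a).1 hsimple
  have hu0 : f u = 0 := by simp [f, u, hs.1]
  have hu1 : fderiv ℂ f u (0, 1) ≠ 0 := by rw [hder]; simpa [u] using hs.2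
  have hinv : (fderiv ℂ f u ∘L .inr ℂ (EuclideanSpace ℂ (Fin d) →L[ℂ]
      EuclideanSpace ℂ (Fin d)) ℂ).IsInvertible := by
    refine ⟨ContinuousLinearEquiv.unitsEquivAut ℂ (Units.mk0 _ hu1), ?_⟩
    ext
    simp
  have cdf : ContDiffAt ℂ 1 f u := hcd.contDiffAt
  have h1 := cdf.implicitFunction_apply_self one_ne_zero hinv
  have h2 := cdf.eventually_apply_implicitFunction one_ne_zero hinv
  have h3 := cdf.contDiffAt_implicitFunction one_ne_zero hinv
  set g := cdf.implicitFunction one_ne_zero hinv with hg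
  have h3' : ContDiffAt ℝ 1 (fun A => (g A).re) u.1 :=
    Complex.reCLM.contDiff.contDiffAt.comp _ (h3.restrict_scalars ℝ)
  have h4 : ∀ᶠ A in 𝓝 u.1, fderiv ℂ f (A, g A) (0, 1) ≠ 0 := by
    have : ContinuousAt (fun A => fderiv ℂ f (A, g A) (0, 1)) u.1 :=
      hdc.continuousAt.comp (f := fun A => (A, g A)) (continuousAt_id.prodMk h3.continuousAt)
    apply this.eventually_ne
    rw [h1]; exact hu1
  have h5 : ∀ᶠ A in 𝓝 u.1, ‖fderiv ℝ (fun A => (g A).re) A‖ <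
      ‖fderiv ℝ (fun A => (g A).re) u.1‖ + 1 := by
    have : ContinuousAt (fun A => ‖fderiv ℝ (fun A => (g A).re) A‖) u.1 :=
      (h3'.continuousAt_fderiv (by simp)).norm
    exact this.eventually_lt continuousAt_const (by simp)
  refine ⟨fun A => (g A).re, ‖fderiv ℝ (fun A => (g A).re) u.1‖ + 1, by positivity, ?_, ?_⟩
  · have : g (T M) = (a : ℂ) := h1
    simp [this]
  · filter_upwards [h2, h4, h5, h3'.eventually (by simp)] with A k2 k4 k5 k3
    refine ⟨k3, k5.le, fun hA => ?_⟩
    rw [hu0] at k2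
    have him : (g A).im = 0 := hfse_real hA _ k2
    have : (((g A).re : ℝ) : ℂ) = g A := by
      apply Complex.ext <;> simp [him]
    rw [this, hfse_simple_iff]
    rw [hder] at k4
    exact ⟨k2, k4⟩


/-- Item (II)(ii) of Appendix A4: given a `C¹` family `(x, ε) ↦ M₁(x, ε)` of Hermitian
matrices with `‖M₁‖, ‖∂ₓM₁‖, ‖∂_εM₁‖ ≤ Γ`, the `s` simple eigenvalues of
`ε M̂ + ε² M₁(x, ε)` near `ε a_j` are `C¹` functions `λ_j(x, ε)` with
`|λ_j − ε a_j| ≤ Cε²`, `|∂ₓλ_j| ≤ Cε²` and `|∂_ελ_j| ≤ C`. -/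
theorem hermitian_family_simple_eigenvalue_branches
    (r s d : ℕ) (hr : 1 ≤ r) (hs : 1 ≤ s) (hd : d = r + s)
    (Mhat : Matrix (Fin d) (Fin d) ℂ) (hMhat : Mhat.IsHermitian)
    (a : Fin s → ℝ) (hmono : StrictMono a) (hpos : ∀ j, 0 < a j)
    (hroots : Mhat.charpoly.roots
      = Multiset.replicate r 0 + ∑ j, ({((a j : ℝ) : ℂ)} : Multiset ℂ))
    (Γ : ℝ) (hΓ : 0 < Γ) (ε' : ℝ) (hε' : 0 < ε')
    (M₁ : ℝ → ℝ → Matrix (Fin d) (Fin d) ℂ)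
    (hherm : ∀ x ε, (M₁ x ε).IsHermitian)
    (hC1 : ContDiffOn ℝ 1
      (fun p : ℝ × ℝ => Matrix.toEuclideanCLM (𝕜 := ℂ) (M₁ p.1 p.2))
      (Set.univ ×ˢ Set.Ioc 0 ε'))
    (hbd : ∀ p ∈ (Set.univ ×ˢ Set.Ioc 0 ε' : Set (ℝ × ℝ)),
      ‖Matrix.toEuclideanCLM (𝕜 := ℂ) (M₁ p.1 p.2)‖ ≤ Γ ∧
      ‖fderivWithin ℝ (fun q : ℝ × ℝ => Matrix.toEuclideanCLM (𝕜 := ℂ) (M₁ q.1 q.2))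
          (Set.univ ×ˢ Set.Ioc 0 ε') p (1, 0)‖ ≤ Γ ∧
      ‖fderivWithin ℝ (fun q : ℝ × ℝ => Matrix.toEuclideanCLM (𝕜 := ℂ) (M₁ q.1 q.2))
          (Set.univ ×ˢ Set.Ioc 0 ε') p (0, 1)‖ ≤ Γ) :
    ∃ C εbar : ℝ, 0 < C ∧ 0 < εbar ∧ εbar ≤ ε' ∧
      ∃ lam : Fin s → ℝ → ℝ → ℝ,
        ∀ j : Fin s,
          ContDiffOn ℝ 1 (fun p : ℝ × ℝ => lam j p.1 p.2)
            (Set.univ ×ˢ Set.Ioo 0 εbar) ∧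
          ∀ x ε : ℝ, ε ∈ Set.Ioo (0 : ℝ) εbar →
            Multiset.count ((lam j x ε : ℝ) : ℂ)
                (((ε : ℂ) • Mhat + (ε : ℂ) ^ 2 • M₁ x ε).charpoly.roots) = 1 ∧
            |lam j x ε - ε * a j| ≤ C * ε ^ 2 ∧
            |fderiv ℝ (fun q : ℝ × ℝ => lam j q.1 q.2) (x, ε) (1, 0)| ≤ C * ε ^ 2 ∧
            |fderiv ℝ (fun q : ℝ × ℝ => lam j q.1 q.2) (x, ε) (0, 1)| ≤ C := by
  have hsim : ∀ j, Multiset.count ((a j : ℝ) : ℂ) Mhat.charpoly.roots = 1 := by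
    intro j
    rw [hroots, Multiset.count_add, Multiset.count_sum', Finset.sum_eq_single j]
    · have h0 : ¬ (0 : ℂ) = ((a j : ℝ) : ℂ) := by
        intro h
        exact (hpos j).ne (by exact_mod_cast h)
      rw [Multiset.count_replicate, if_neg h0, Multiset.count_singleton_self]
    · intro b _ hb
      rw [Multiset.count_singleton, if_neg]
      intro h
      exact hb (hmono.injective (Complex.ofReal_injective h)).symm
    · simp
  choose h K hK hha hev using fun j => hfse_local Mhat (a j) (hsim j)
  obtain ⟨δ, hδ, hball⟩ := Metric.eventually_nhds_iff_ball.1 (eventually_all.2 hev)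
  set T := Matrix.toEuclideanCLM (𝕜 := ℂ) (n := Fin d) with hT
  set F : ℝ × ℝ → (EuclideanSpace ℂ (Fin d) →L[ℂ] EuclideanSpace ℂ (Fin d)) :=
    fun p => T (M₁ p.1 p.2) with hF
  let B : ℝ × ℝ → (EuclideanSpace ℂ (Fin d) →L[ℂ] EuclideanSpace ℂ (Fin d)) :=
    fun p => T Mhat + p.2 • F p
  let K0 : ℝ := ∑ j, K j
  have hKK : ∀ j, K j ≤ K0 := fun j =>
    Finset.single_le_sum (f := K) (fun i _ => (hK i).le) (Finset.mem_univ j)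
  have hK0 : 0 < K0 := (hK ⟨0, hs⟩).trans_le (hKK _)
  let a0 : ℝ := ∑ j, a j
  have haa : ∀ j, a j ≤ a0 := fun j =>
    Finset.single_le_sum (f := a) (fun i _ => (hpos i).le) (Finset.mem_univ j)
  have ha0 : 0 < a0 := (hpos ⟨0, hs⟩).trans_le (haa _)
  have hKΓ : 0 < K0 * Γ := mul_pos hK0 hΓ
  let εb : ℝ := min (min ε' 1) (δ / Γ)
  have hb1 : εb ≤ ε' := (min_le_left _ _).trans (min_le_left _ _)
  have hb2 : εb ≤ 1 := (min_le_left _ _).trans (min_le_right _ _)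
  have hb3 : εb ≤ δ / Γ := min_le_right _ _
  have hmem : ∀ p : ℝ × ℝ, p.2 ∈ Set.Ioo 0 εb →
      p ∈ (Set.univ ×ˢ Set.Ioc 0 ε' : Set (ℝ × ℝ)) := fun p hp =>
    ⟨trivial, hp.1, hp.2.le.trans hb1⟩
  have hnhds : ∀ p : ℝ × ℝ, p.2 ∈ Set.Ioo 0 εb →
      (Set.univ ×ˢ Set.Ioc 0 ε' : Set (ℝ × ℝ)) ∈ 𝓝 p := fun p hp =>
    prod_mem_nhds univ_mem (Ioc_mem_nhds hp.1 (hp.2.trans_le hb1))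
  have hFc : ∀ p : ℝ × ℝ, p.2 ∈ Set.Ioo 0 εb → ContDiffAt ℝ 1 F p := fun p hp =>
    hC1.contDiffAt (hnhds p hp)
  have hBc : ∀ p : ℝ × ℝ, p.2 ∈ Set.Ioo 0 εb → ContDiffAt ℝ 1 B p := fun p hp =>
    contDiffAt_const.add (contDiffAt_snd.smul (hFc p hp))
  have hdist : ∀ p : ℝ × ℝ, p.2 ∈ Set.Ioo 0 εb → ‖B p - T Mhat‖ ≤ p.2 * Γ := by
    intro p hp
    have : B p - T Mhat = p.2 • F p := by simp [B]
    rw [this, norm_smul, Real.norm_of_nonneg hp.1.le]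
    exact mul_le_mul_of_nonneg_left (hbd p (hmem p hp)).1 hp.1.le
  have hBb : ∀ p : ℝ × ℝ, p.2 ∈ Set.Ioo 0 εb → B p ∈ Metric.ball (T Mhat) δ := by
    intro p hp
    rw [mem_ball_iff_norm]
    refine (hdist p hp).trans_lt ?_
    exact (lt_div_iff₀ hΓ).1 (hp.2.trans_le hb3)
  have hBM : ∀ p : ℝ × ℝ, T.symm (B p) = Mhat + (p.2 : ℂ) • M₁ p.1 p.2 := by
    intro p
    apply EquivLike.injective T
    rw [StarAlgEquiv.apply_symm_apply, map_add, map_smul]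
    simp only [B, hF]
    congr 1
  have hcd : ∀ j (p : ℝ × ℝ), p.2 ∈ Set.Ioo 0 εb →
      ContDiffAt ℝ 1 (fun p : ℝ × ℝ => p.2 * h j (B p)) p := fun j p hp =>
    contDiffAt_snd.mul (ContDiffAt.comp p (hball _ (hBb p hp) j).1 (hBc p hp))
  have hval : ∀ j (p : ℝ × ℝ), p.2 ∈ Set.Ioo 0 εb → |h j (B p) - a j| ≤ K0 * Γ * p.2 := by
    intro j p hp
    have := Convex.norm_image_sub_le_of_norm_fderiv_le (𝕜 := ℝ) (f := h j) (C := K0)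
      (s := Metric.ball (T Mhat) δ) (x := T Mhat) (y := B p)
      (fun x hx => (hball x hx j).1.differentiableAt (by simp))
      (fun x hx => (hball x hx j).2.1.trans (hKK j)) (convex_ball _ _)
      (Metric.mem_ball_self hδ) (hBb p hp)
    rw [hha, Real.norm_eq_abs] at this
    refine this.trans ?_
    have := mul_le_mul_of_nonneg_left (hdist p hp) hK0.le
    linarith
  have hfd : ∀ j (p : ℝ × ℝ), p.2 ∈ Set.Ioo 0 εb → ∀ v : ℝ × ℝ,
      fderiv ℝ (fun p : ℝ × ℝ => p.2 * h j (B p)) p v =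
        p.2 * fderiv ℝ (h j) (B p) (p.2 • fderiv ℝ F p v + v.2 • F p) + v.2 * h j (B p) := by
    intro j p hp v
    have k1 : HasFDerivAt F (fderiv ℝ F p) p :=
      ((hFc p hp).differentiableAt (by simp)).hasFDerivAt
    have k2 : HasFDerivAt (fun q : ℝ × ℝ => q.2) (ContinuousLinearMap.snd ℝ ℝ ℝ) p :=
      hasFDerivAt_snd
    have k3 := (k2.smul k1).const_add (T Mhat)
    have k4 : HasFDerivAt (h j) (fderiv ℝ (h j) (B p)) (B p) :=
      ((hball _ (hBb p hp) j).1.differentiableAt (by simp)).hasFDerivAt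
    have k5 := HasFDerivAt.comp p k4 k3
    have k6 := (k2.mul k5).fderiv
    have k7 : fderiv ℝ (fun p : ℝ × ℝ => p.2 * h j (B p)) p = _ := k6
    rw [k7]
    simp [B, mul_comm]
    ring
  have hop : ∀ j (p : ℝ × ℝ), p.2 ∈ Set.Ioo 0 εb → ∀ w R, ‖w‖ ≤ R →
      |fderiv ℝ (h j) (B p) w| ≤ K0 * R := by
    intro j p hp w R hw
    refine (ContinuousLinearMap.le_opNorm (fderiv ℝ (h j) (B p)) w).trans ?_
    exact mul_le_mul ((hball _ (hBb p hp) j).2.1.trans (hKK j)) hw (norm_nonneg _) hK0.le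
  refine ⟨a0 + 3 * (K0 * Γ), εb, by positivity, ?_, hb1, fun j x ε => ε * h j (B (x, ε)), ?_⟩
  · exact lt_min (lt_min hε' one_pos) (div_pos hδ hΓ)
  intro j
  refine ⟨fun p hp => (hcd j p hp.2).contDiffWithinAt, ?_⟩
  intro x ε hε
  have hε0 := hε.1
  have hε1 : ε < 1 := hε.2.trans_le hb2
  have hp : ((x, ε) : ℝ × ℝ).2 ∈ Set.Ioo 0 εb := hε
  obtain ⟨b1, b2, b3⟩ := hbd (x, ε) (hmem (x, ε) hp)
  rw [fderivWithin_of_mem_nhds (hnhds (x, ε) hp)] at b2 b3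
  have hv := hval j (x, ε) hp
  simp only at hv
  refine ⟨?_, ?_, ?_, ?_⟩
  · have hherm' : (T.symm (B (x, ε))).IsHermitian := by
      rw [hBM]
      refine hMhat.add ?_
      have := hherm x ε
      unfold Matrix.IsHermitian at this ⊢
      rw [Matrix.conjTranspose_smul, this]
      simp
    have k := (hball _ (hBb (x, ε) hp) j).2.2 hherm'
    rw [hBM] at k
    have k2 := hfse_scale _ _ (ε : ℂ) (by exact_mod_cast hε0.ne') k
    rw [smul_add, smul_smul, ← pow_two] at k2
    simpa using k2
  · rw [← mul_sub, abs_mul, abs_of_pos hε0]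
    have := mul_le_mul_of_nonneg_left hv hε0.le
    nlinarith [mul_pos hε0 hε0]
  · have e := hfd j (x, ε) hp (1, 0)
    have z : ((1, 0) : ℝ × ℝ).2 • F (x, ε) = 0 := by
      rw [← norm_eq_zero, norm_smul]; simp
    rw [z] at e
    simp only [add_zero, zero_mul] at e
    refine (congrArg abs e).trans_le ?_
    rw [abs_mul, abs_of_pos hε0]
    have hn : ‖ε • fderiv ℝ F (x, ε) (1, 0)‖ ≤ ε * Γ := by
      rw [norm_smul, Real.norm_of_nonneg hε0.le]
      exact mul_le_mul_of_nonneg_left b2 hε0.le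
    have := mul_le_mul_of_nonneg_left (hop j (x, ε) hp _ _ hn) hε0.le
    nlinarith [mul_pos hε0 hε0]
  · have e := hfd j (x, ε) hp (0, 1)
    simp only [one_smul, one_mul] at e
    refine (congrArg abs e).trans_le ?_
    have hn : ‖ε • fderiv ℝ F (x, ε) (0, 1) + F (x, ε)‖ ≤ 2 * Γ := by
      refine (norm_add_le _ _).trans ?_
      rw [norm_smul, Real.norm_of_nonneg hε0.le]
      have : ε * ‖fderiv ℝ F (x, ε) (0, 1)‖ ≤ 1 * Γ :=
        mul_le_mul hε1.le b3 (norm_nonneg _) zero_le_one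
      have b1' : ‖F (x, ε)‖ ≤ Γ := b1
      linarith
    have h1 := hop j (x, ε) hp _ _ hn
    refine (abs_add_le _ _).trans ?_
    rw [abs_mul, abs_of_pos hε0]
    have h2 : ε * |fderiv ℝ (h j) (B (x, ε)) (ε • fderiv ℝ F (x, ε) (0, 1) + F (x, ε))|
        ≤ 1 * (K0 * (2 * Γ)) := mul_le_mul hε1.le h1 (abs_nonneg _) zero_le_one
    have h3 : |h j (B (x, ε))| ≤ a0 + K0 * Γ := by
      have h4 : K0 * Γ * ε ≤ K0 * Γ := by nlinarith
      have := haa j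
      have := hpos j
      have := abs_le.1 hv
      rw [abs_le]
      constructor <;> linarith
    linarith
end

section
/- Let d = r + s with r, s ≥ 1, let A be an s×s Hermitian matrix with simple eigenvalues 0 < a₁ < ⋯ < a_s, and let Γ > 0. Then there exist C > 0 and ε̄ > 0 such that the following holds for all ε ∈ (0, ε̄) and all x ∈ ℝ with |x| ≤ 1: if N is an r×r Hermitian matrix, Q is an s×s Hermitian matrix and P is an r×s complex matrix, all of operator norm at most Γ, and M is the d×d Hermitian matrix with block form M = [[ε² x² N, ε² x P], [ε² x P*, ε A + ε² Q]] relative to the decomposition ℂ^d = ℂ^r ⊕ ℂ^s, then at least r eigenvalues of M, counted with multiplicity, lie in the interval [−C ε² x², C ε² x²]. -/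
open scoped Matrix.Norms.L2Operator in
lemma bms_matOpNorm_eq {m n : Type*} [Fintype m] [Fintype n] [DecidableEq n]
    (M : Matrix m n ℂ) : matOpNorm M = ‖M‖ := rfl

lemma bms_mulVec_le {m n : Type*} [Fintype m] [Fintype n] [DecidableEq n]
    (M : Matrix m n ℂ) (v : n → ℂ) :
    ‖WithLp.toLp 2 (M.mulVec v)‖ ≤ matOpNorm M * ‖WithLp.toLp 2 v‖ :=
  (LinearMap.toContinuousLinearMap (Matrix.toEuclideanLin (𝕜 := ℂ) M)).le_opNorm (WithLp.toLp 2 v)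

open scoped Matrix.Norms.L2Operator in
lemma bms_conjTranspose {m n : Type*} [Fintype m] [Fintype n] [DecidableEq n] [DecidableEq m]
    (M : Matrix m n ℂ) : matOpNorm M.conjTranspose = matOpNorm M := by
  rw [bms_matOpNorm_eq, bms_matOpNorm_eq, Matrix.l2_opNorm_conjTranspose]

lemma bms_inner {ι : Type*} [Fintype ι] [DecidableEq ι] (M : Matrix ι ι ℂ) (hM : M.IsHermitian)
    (v : ι → ℂ) (k : ι) :
    inner ℂ (hM.eigenvectorBasis k) (WithLp.toLp 2 (M.mulVec v)) =
      (hM.eigenvalues k : ℂ) * inner ℂ (hM.eigenvectorBasis k) (WithLp.toLp 2 v) := by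
  have h := hM.mulVec_eigenvectorBasis k
  rw [EuclideanSpace.inner_eq_star_dotProduct, EuclideanSpace.inner_eq_star_dotProduct]
  simp only
  rw [dotProduct_comm, Matrix.dotProduct_mulVec, dotProduct_comm _ (star _)]
  have h2 : Matrix.vecMul (star (hM.eigenvectorBasis k).ofLp) M =
      (hM.eigenvalues k : ℂ) • star (hM.eigenvectorBasis k).ofLp := by
    have h3 := congrArg star h
    rw [Matrix.star_mulVec, hM.eq] at h3
    rw [h3]
    ext i
    simp
  rw [h2, smul_dotProduct, smul_eq_mul]

lemma bms_count {ι : Type*} [Fintype ι] [DecidableEq ι] (M : Matrix ι ι ℂ) (hM : M.IsHermitian)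
    (r : ℕ) (δ : ℝ) (hδ : 0 ≤ δ) (V : (Fin r → ℂ) →ₗ[ℂ] (ι → ℂ)) (hV : ∀ u, V u = 0 → u = 0)
    (h : ∀ u, ‖WithLp.toLp 2 (M.mulVec (V u))‖ ≤ δ * ‖WithLp.toLp 2 (V u)‖) :
    r ≤ (Finset.univ.filter fun k : ι => -δ ≤ hM.eigenvalues k ∧ hM.eigenvalues k ≤ δ).card := by
  classical
  by_contra hlt
  push Not at hlt
  set S := Finset.univ.filter fun k : ι => -δ ≤ hM.eigenvalues k ∧ hM.eigenvalues k ≤ δ with hS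
  let b := hM.eigenvectorBasis
  let L : (Fin r → ℂ) →ₗ[ℂ] (S → ℂ) :=
    LinearMap.pi fun k => (innerₛₗ ℂ (b k)) ∘ₗ
      (WithLp.linearEquiv 2 ℂ (ι → ℂ)).symm.toLinearMap ∘ₗ V
  have hL : LinearMap.ker L ≠ ⊥ := by
    apply LinearMap.ker_ne_bot_of_finrank_lt
    simpa using hlt
  obtain ⟨u, hu, hu0⟩ := (Submodule.ne_bot_iff _).1 hL
  have hc : ∀ k ∈ S, inner ℂ (b k) (WithLp.toLp 2 (V u)) = 0 := by
    intro k hk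
    exact congrFun (LinearMap.mem_ker.1 hu) ⟨k, hk⟩
  have h1 := b.sum_sq_norm_inner_right (WithLp.toLp 2 (V u))
  have h2 := b.sum_sq_norm_inner_right (WithLp.toLp 2 (M.mulVec (V u)))
  have hv0 : WithLp.toLp 2 (V u) ≠ 0 := by
    intro h0
    exact hu0 (hV u (by simpa using h0))
  have hvpos : 0 < ‖WithLp.toLp 2 (V u)‖ ^ 2 := by positivity
  have h3 : δ ^ 2 * ‖WithLp.toLp 2 (V u)‖ ^ 2 < ‖WithLp.toLp 2 (M.mulVec (V u))‖ ^ 2 := by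
    rw [← h1, ← h2, Finset.mul_sum]
    have key : ∀ k, k ∉ S → δ ^ 2 < hM.eigenvalues k ^ 2 := by
      intro k hk
      simp only [hS, Finset.mem_filter, Finset.mem_univ, true_and, not_and_or, not_le] at hk
      rcases hk with hk | hk <;> nlinarith
    have e : ∀ k, ‖inner ℂ (b k) (WithLp.toLp 2 (M.mulVec (V u)))‖ ^ 2 =
        hM.eigenvalues k ^ 2 * ‖inner ℂ (b k) (WithLp.toLp 2 (V u))‖ ^ 2 := by
      intro k
      rw [bms_inner M hM, norm_mul, mul_pow, Complex.norm_real, Real.norm_eq_abs, sq_abs]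
    apply Finset.sum_lt_sum
    · intro k _
      rw [e]
      by_cases hk : k ∈ S
      · simp [hc k hk]
      · exact mul_le_mul_of_nonneg_right (key k hk).le (by positivity)
    · by_contra hno
      push Not at hno
      have hz : ∀ k, inner ℂ (b k) (WithLp.toLp 2 (V u)) = 0 := by
        intro k
        by_cases hk : k ∈ S
        · exact hc k hk
        · by_contra hne
          have := hno k (Finset.mem_univ k)
          rw [e] at this
          have hp : 0 < ‖inner ℂ (b k) (WithLp.toLp 2 (V u))‖ ^ 2 := by positivity
          have := key k hk
          nlinarith
      simp [hz] at h1
      rw [← h1] at hvpos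
      simp_all
  have h4 := pow_le_pow_left₀ (norm_nonneg _) (h u) 2
  rw [mul_pow] at h4
  linarith

/-- Item (III) of Appendix A4: if `A` is Hermitian with simple eigenvalues
`0 < a₁ < ⋯ < a_s` and `M` is the Hermitian block matrix
`[[ε²x²N, ε²xP], [ε²xP*, εA + ε²Q]]` with `‖N‖, ‖Q‖, ‖P‖ ≤ Γ`, then for `ε` small and
`|x| ≤ 1` at least `r` eigenvalues of `M`, counted with multiplicity, lie in
`[−Cε²x², Cε²x²]`. -/
theorem block_matrix_small_eigenvalues
    (r s : ℕ) (hr : 1 ≤ r) (hs : 1 ≤ s)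
    (A : Matrix (Fin s) (Fin s) ℂ) (hA : A.IsHermitian)
    (a : Fin s → ℝ) (hmono : StrictMono a) (hpos : ∀ j, 0 < a j)
    (hroots : A.charpoly.roots = ∑ j, ({((a j : ℝ) : ℂ)} : Multiset ℂ))
    (Γ : ℝ) (hΓ : 0 < Γ) :
    ∃ C εbar : ℝ, 0 < C ∧ 0 < εbar ∧
      ∀ ε x : ℝ, ε ∈ Set.Ioo (0 : ℝ) εbar → |x| ≤ 1 →
      ∀ (N : Matrix (Fin r) (Fin r) ℂ) (Q : Matrix (Fin s) (Fin s) ℂ)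
        (P : Matrix (Fin r) (Fin s) ℂ),
        N.IsHermitian → Q.IsHermitian →
        matOpNorm N ≤ Γ → matOpNorm Q ≤ Γ → matOpNorm P ≤ Γ →
        ∀ hM : (Matrix.fromBlocks
            (((ε ^ 2 * x ^ 2 : ℝ) : ℂ) • N) (((ε ^ 2 * x : ℝ) : ℂ) • P)
            (((ε ^ 2 * x : ℝ) : ℂ) • P.conjTranspose)
            ((ε : ℂ) • A + ((ε ^ 2 : ℝ) : ℂ) • Q)).IsHermitian,
          r ≤ (Finset.univ.filter fun k : Fin r ⊕ Fin s =>
            -(C * ε ^ 2 * x ^ 2) ≤ hM.eigenvalues k ∧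
              hM.eigenvalues k ≤ C * ε ^ 2 * x ^ 2).card := by
  
  have hdet : IsUnit A.det := by
    rw [isUnit_iff_ne_zero]
    intro h0
    have : (0 : ℂ) ∈ A.charpoly.roots := by
      rw [Polynomial.mem_roots A.charpoly_monic.ne_zero, Polynomial.IsRoot, Matrix.eval_charpoly]
      simp [Matrix.det_neg, h0]
    rw [hroots, Multiset.mem_sum] at this
    obtain ⟨j, -, hj⟩ := this
    have h1 : (0 : ℂ) = (a j : ℂ) := by simpa using hj
    have h2 := hpos j
    have h3 : a j = 0 := by exact_mod_cast h1.symm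
    linarith
  obtain ⟨K, hK, hAK⟩ : ∃ K : ℝ, 0 < K ∧ ∀ w : Fin s → ℂ,
      ‖WithLp.toLp 2 w‖ ≤ K * ‖WithLp.toLp 2 (A.mulVec w)‖ := by
    have hn : 0 ≤ matOpNorm A⁻¹ := norm_nonneg _
    refine ⟨matOpNorm A⁻¹ + 1, by positivity, fun w => ?_⟩
    have h1 := bms_mulVec_le A⁻¹ (A.mulVec w)
    rw [Matrix.mulVec_mulVec, Matrix.nonsing_inv_mul _ hdet, Matrix.one_mulVec] at h1
    nlinarith [norm_nonneg (WithLp.toLp 2 (A.mulVec w))]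
  refine ⟨2 * Γ, 1 / (2 * K * Γ), by positivity, by positivity, ?_⟩
  rintro ε x ⟨hε, hε'⟩ hx N Q P hN hQ hNΓ hQΓ hPΓ hM
  rw [lt_div_iff₀ (by positivity)] at hε'
  set D : Matrix (Fin s) (Fin s) ℂ := (ε : ℂ) • A + ((ε ^ 2 : ℝ) : ℂ) • Q with hD
  have hDlow : ∀ w : Fin s → ℂ,
      ε * ‖WithLp.toLp 2 w‖ ≤ 2 * K * ‖WithLp.toLp 2 (D.mulVec w)‖ := by
    intro w
    have e : (ε : ℂ) • WithLp.toLp 2 (A.mulVec w) =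
        WithLp.toLp 2 (D.mulVec w) - ((ε ^ 2 : ℝ) : ℂ) • WithLp.toLp 2 (Q.mulVec w) := by
      rw [hD, Matrix.add_mulVec, Matrix.smul_mulVec, Matrix.smul_mulVec, WithLp.toLp_add,
        WithLp.toLp_smul, WithLp.toLp_smul, add_sub_cancel_right]
    have e2 := congrArg norm e
    have e3 := norm_sub_le (WithLp.toLp 2 (D.mulVec w))
      (((ε ^ 2 : ℝ) : ℂ) • WithLp.toLp 2 (Q.mulVec w))
    rw [← e2, norm_smul, norm_smul, Complex.norm_real, Complex.norm_real, Real.norm_of_nonneg hε.le,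
      Real.norm_of_nonneg (by positivity)] at e3
    have hq := (bms_mulVec_le Q w).trans (mul_le_mul_of_nonneg_right hQΓ (norm_nonneg _))
    have ha := mul_le_mul_of_nonneg_left (hAK w) hε.le
    have hq2 := mul_le_mul_of_nonneg_left hq (by positivity : 0 ≤ K * ε ^ 2)
    have hq3 := mul_le_mul_of_nonneg_right hε'.le
      (by positivity : 0 ≤ ε * ‖WithLp.toLp 2 w‖)
    have e4 := mul_le_mul_of_nonneg_left e3 hK.le
    nlinarith
  have hDdet : IsUnit D.det := by
    rw [isUnit_iff_ne_zero]
    intro h0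
    obtain ⟨w, hw0, hw⟩ := Matrix.exists_mulVec_eq_zero_iff.2 h0
    have h1 := hDlow w
    rw [hw] at h1
    have h2 : WithLp.toLp 2 w ≠ 0 := fun h => hw0 (by simpa using h)
    have h3 : 0 < ‖WithLp.toLp 2 w‖ := norm_pos_iff.2 h2
    simp at h1
    nlinarith
  obtain ⟨W, hDW⟩ : ∃ W : Matrix (Fin s) (Fin r) ℂ,
      D * W = -(((ε ^ 2 * x : ℝ) : ℂ) • P.conjTranspose) :=
    ⟨D⁻¹ * -(((ε ^ 2 * x : ℝ) : ℂ) • P.conjTranspose), by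
      rw [← Matrix.mul_assoc, Matrix.mul_nonsing_inv _ hDdet, Matrix.one_mul]⟩
  let V : (Fin r → ℂ) →ₗ[ℂ] (Fin r ⊕ Fin s → ℂ) := Matrix.mulVecLin (Matrix.fromRows 1 W)
  have hVu : ∀ u, V u = Sum.elim u (W.mulVec u) := by
    intro u
    simp [V, Matrix.fromRows_mulVec]
  have hnorm1 : ∀ (u : Fin r → ℂ) (w : Fin s → ℂ),
      ‖WithLp.toLp 2 u‖ ≤ ‖WithLp.toLp 2 (Sum.elim u w)‖ := by
    intro u w
    rw [EuclideanSpace.norm_eq, EuclideanSpace.norm_eq]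
    apply Real.sqrt_le_sqrt
    simp only [Fintype.sum_sum_type, Sum.elim_inl, Sum.elim_inr]
    have : 0 ≤ ∑ i, ‖w i‖ ^ 2 := by positivity
    linarith
  have hnorm2 : ∀ (u : Fin r → ℂ),
      ‖WithLp.toLp 2 (Sum.elim u (0 : Fin s → ℂ))‖ = ‖WithLp.toLp 2 u‖ := by
    intro u
    rw [EuclideanSpace.norm_eq, EuclideanSpace.norm_eq]
    simp [Fintype.sum_sum_type]
  have hx2 : x ^ 2 = |x| * |x| := by rw [← sq, sq_abs]
  have := bms_count _ hM r (2 * Γ * ε ^ 2 * x ^ 2) (by positivity) V (fun u hu => by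
      rw [hVu] at hu
      funext i
      exact congrFun hu (Sum.inl i)) (fun u => by
      rw [hVu, Matrix.fromBlocks_mulVec]
      simp only [Sum.elim_comp_inl, Sum.elim_comp_inr]
      have z : (((ε ^ 2 * x : ℝ) : ℂ) • P.conjTranspose).mulVec u + D.mulVec (W.mulVec u) = 0 := by
        rw [Matrix.mulVec_mulVec, hDW, ← Matrix.add_mulVec]
        simp
      rw [z, hnorm2]
      refine le_trans ?_ (mul_le_mul_of_nonneg_left (hnorm1 u (W.mulVec u)) (by positivity))
      have hw := hDlow (W.mulVec u)
      rw [Matrix.mulVec_mulVec, hDW, Matrix.neg_mulVec, Matrix.smul_mulVec, WithLp.toLp_neg,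
        norm_neg, WithLp.toLp_smul, norm_smul, Complex.norm_real, norm_mul,
        Real.norm_of_nonneg (sq_nonneg ε), Real.norm_eq_abs] at hw
      have hp := (bms_mulVec_le P.conjTranspose u).trans
        (mul_le_mul_of_nonneg_right ((bms_conjTranspose P).le.trans hPΓ) (norm_nonneg _))
      have hn := (bms_mulVec_le N u).trans (mul_le_mul_of_nonneg_right hNΓ (norm_nonneg _))
      have hpw := (bms_mulVec_le P (W.mulVec u)).trans
        (mul_le_mul_of_nonneg_right hPΓ (norm_nonneg _))
      rw [Matrix.smul_mulVec, Matrix.smul_mulVec, WithLp.toLp_add, WithLp.toLp_smul,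
        WithLp.toLp_smul]
      refine (norm_add_le _ _).trans ?_
      rw [norm_smul, norm_smul, Complex.norm_real, Complex.norm_real, norm_mul, norm_mul,
        Real.norm_of_nonneg (sq_nonneg ε), Real.norm_of_nonneg (sq_nonneg x), Real.norm_eq_abs]
      set U := ‖WithLp.toLp 2 u‖
      set Y := ‖WithLp.toLp 2 (W.mulVec u)‖
      have hU : 0 ≤ U := norm_nonneg _
      have hY : Y ≤ |x| * U := by
        have t1 : ε * Y ≤ ε * (|x| * U) := by
          calc ε * Y ≤ _ := hw
            _ ≤ 2 * K * (ε ^ 2 * |x| * (Γ * U)) := by gcongr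
            _ = (ε * (2 * K * Γ)) * (ε * (|x| * U)) := by ring
            _ ≤ 1 * (ε * (|x| * U)) := by gcongr
            _ = _ := one_mul _
        exact le_of_mul_le_mul_left t1 hε
      calc _ ≤ ε ^ 2 * x ^ 2 * (Γ * U) + ε ^ 2 * |x| * (Γ * (|x| * U)) := by
            gcongr
            exact hpw.trans (by gcongr)
        _ = _ := by rw [hx2]; ring)
  exact this
end
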